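/- arXiv:1305.4714 — 2 statements merged into one kernel-verified Lean document; each statement's English description precedes it below -/
import Mathlib

section
/- (Theorem 6, high-energy asymptotics of the modified position) Assume Assumption C and fix T > 0 and (x₀,ξ₀) ∈ ℝ^d × ℝ^d with ξ₀ ≠ 0. Let (y,η) solve the Hamilton equations for k with y(0)=x₀, η(0)=ξ₀, and suppose |y(s)| ≥ c|s| − C for all s ∈ ℝ (with c, C > 0), so that x± = lim_{s→±∞} ( y(s) − ∇_ξΨ(s,η(s)) ) exist, where Ψ(t,ξ) = ∫₀ᵗ k(sξ,ξ) ds. For each λ ≥ 1, let (x_λ, ξ_λ) solve the Hamilton equations for p with x_λ(0)=x₀, ξ_λ(0)=λξ₀, and suppose there exist λ₀ ≥ 1 and c', C', M > 0 such that |x_λ(s)| ≥ c'λ|s| − C' and |ξ_λ(s)| ≤ Mλ for all |s| ≤ T and λ ≥ λ₀. Then for every t with 0 < t ≤ T, lim_{λ→∞} ( x_λ(t) − ∇_ξΦ(t, ξ_λ(t)) ) = x₊, and for every t with −T ≤ t < 0 the same limit equals x₋. -/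
open Filter MeasureTheory
open scoped Topology BigOperators

noncomputable section

abbrev E (d : ℕ) := EuclideanSpace ℝ (Fin d)

/-- Japanese bracket `⟨x⟩ = (1+|x|²)^{1/2}`. -/
def jap {d : ℕ} (x : E d) : ℝ := Real.sqrt (1 + ‖x‖ ^ 2)

/-- Japanese bracket of a real number. -/
def japr (t : ℝ) : ℝ := Real.sqrt (1 + t ^ 2)

/-- The kinetic energy symbol `k(x,ξ) = (1/2) Σ a_{mn}(x) ξ_m ξ_n`. -/
def kk {d : ℕ} (a : Fin d → Fin d → E d → ℝ) (x ξ : E d) : ℝ :=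
  (1 / 2) * ∑ m : Fin d, ∑ n : Fin d, a m n x * ξ m * ξ n

/-- `(y, η)` solves the Hamilton equations for the Hamiltonian `h`. -/
def IsHamiltonSol {d : ℕ} (h : E d → E d → ℝ) (y η : ℝ → E d) : Prop :=
  ∀ t : ℝ, HasDerivAt y (gradient (h (y t)) (η t)) t ∧
    HasDerivAt η (-gradient (fun x => h x (η t)) (y t)) t

/-- Assumption C (with long range exponent `μ` and short range exponent `ν`). -/
def AssumptionC {d : ℕ} (μ ν : ℝ) (a : Fin d → Fin d → E d → ℝ) (VL VS : E d → ℝ) : Prop :=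
  (∀ m n, ContDiff ℝ (⊤ : ℕ∞) (a m n)) ∧
  (∀ m n x, a m n x = a n m x) ∧
  (∀ (x ξ : E d), ξ ≠ 0 → 0 < ∑ m : Fin d, ∑ n : Fin d, a m n x * ξ m * ξ n) ∧
  (∀ m n (j : ℕ), ∃ C > 0, ∀ x : E d,
    ‖iteratedFDeriv ℝ j (fun z => a m n z - if m = n then (1 : ℝ) else 0) x‖
      ≤ C * jap x ^ (-μ - (j : ℝ))) ∧
  ContDiff ℝ (⊤ : ℕ∞) VL ∧ ContDiff ℝ (⊤ : ℕ∞) VS ∧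
  (∀ j : ℕ, ∃ C > 0, ∀ x : E d,
    ‖iteratedFDeriv ℝ j VL x‖ ≤ C * jap x ^ (2 - μ - (j : ℝ))) ∧
  (∀ j : ℕ, ∃ C > 0, ∀ x : E d,
    ‖iteratedFDeriv ℝ j VS x‖ ≤ C * jap x ^ (2 - ν - (j : ℝ)))

/-- `Ψ(t,ξ) = ∫₀ᵗ k(sξ, ξ) ds`. -/
def Psi {d : ℕ} (a : Fin d → Fin d → E d → ℝ) (t : ℝ) (ξ : E d) : ℝ :=
  ∫ s in (0 : ℝ)..t, kk a (s • ξ) ξ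

/-- The Dollard type phase `Φ(t,ξ) = ∫₀ᵗ ( k(sξ,ξ) + V^{(L)}(sξ) ) ds`. -/
def Phi {d : ℕ} (a : Fin d → Fin d → E d → ℝ) (VL : E d → ℝ) (t : ℝ) (ξ : E d) : ℝ :=
  ∫ s in (0 : ℝ)..t, (kk a (s • ξ) ξ + VL (s • ξ))

/-!
Rescaling `y_λ(s) = x_λ(s / λ)`, `η_λ(s) = λ⁻¹ ξ_λ(s / λ)` turns a trajectory of energy `λ²` on the
time interval `[0, t]` into one with momentum of order one, subject to the weak potential `λ⁻² V`,
on the long interval `[0, λt]`; the limit at high energy becomes a limit at large time. There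
`‖y_λ(s)‖` is comparable with `s ≤ λt`, so that `λ⁻² V` has the decay of the perturbation
of the kinetic energy: forces of size `s^(-1-μ)` (long range) and `s^(-1-2μ)` (short range). The
derivative of the modified position `y_λ - ∇Φ` is then `O(s^(-2μ))` uniformly in `λ`: the forces
cancel to first order, because `∇Φ` is the drift accumulated along the straight line `s ↦ sη`, from
which `y_λ` departs by only `O(s^(1-μ))`. As `2μ > 1` this is integrable, so that the modified
position at time `λt` is, up to an error small uniformly in `λ`, the one at a fixed large time,
where the weak potential disappears as `λ → ∞`. Negative times follow by time reversal.
-/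

section ParametricIntegral

variable {F G : Type*} [NormedAddCommGroup F] [NormedSpace ℝ F] [ProperSpace F]
  [NormedAddCommGroup G] [NormedSpace ℝ G] {f : F → ℝ → G} {f' : F → ℝ → F →L[ℝ] G}

theorem hasFDerivAt_intervalIntegral_of_continuous (hf : Continuous f.uncurry)
    (hf' : Continuous f'.uncurry) (hff' : ∀ x s, HasFDerivAt (f · s) (f' x s) x) (a b : ℝ) (x : F) :
    HasFDerivAt (fun x => ∫ s in a..b, f x s) (∫ s in a..b, f' x s) x := by
  obtain ⟨K, hK⟩ := ((isCompact_closedBall x 1).prod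
    (isCompact_uIcc (a := a) (b := b))).exists_bound_of_continuousOn hf'.continuousOn
  exact intervalIntegral.hasFDerivAt_integral_of_dominated_of_fderiv_le
    (bound := fun _ => K) (Metric.closedBall_mem_nhds x one_pos)
    (.of_forall fun x => (hf.uncurry_left x).aestronglyMeasurable)
    ((hf.uncurry_left x).intervalIntegrable _ _) (hf'.uncurry_left x).aestronglyMeasurable
    (.of_forall fun s hs z hz => hK (z, s) ⟨hz, Set.uIoc_subset_uIcc hs⟩)
    intervalIntegrable_const (.of_forall fun s _ z _ => hff' z s)

theorem hasDerivAt_intervalIntegral_of_continuous [CompleteSpace G] {u : ℝ → F} {u' : F} {t : ℝ}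
    (hu : HasDerivAt u u' t) (hf : Continuous f.uncurry) (hf' : Continuous f'.uncurry)
    (hff' : ∀ x s, HasFDerivAt (f · s) (f' x s) x) (a : ℝ) :
    HasDerivAt (fun r => ∫ s in a..r, f (u r) s) (f (u t) t + ∫ s in a..t, f' (u t) s u') t := by
  have hpartial : HasStrictFDerivAt (fun p : F × ℝ => ∫ s in a..p.2, f p.1 s)
      ((∫ s in a..t, f' (u t) s).coprod (ContinuousLinearMap.toSpanSingleton ℝ (f (u t) t)))
      (u t, t) :=
    hasStrictFDerivAt_uncurry_coprod (u := (u t, t)) (f := fun x r => ∫ s in a..r, f x s)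
      (f₁ := fun x r => ∫ s in a..r, f' x s)
      (f₂ := fun x r => ContinuousLinearMap.toSpanSingleton ℝ (f x r))
      (.of_forall fun p => hasFDerivAt_intervalIntegral_of_continuous hf hf' hff' a p.2 p.1)
      (.of_forall fun p => ((hf.uncurry_left p.1).integral_hasStrictDerivAt a p.2).hasDerivAt)
      (intervalIntegral.continuous_parametric_primitive_of_continuous hf').continuousAt
      (((ContinuousLinearMap.toSpanSingletonCLE (𝕜 := ℝ) (E := G)).continuous.comp hf).continuousAt)
  have hcomp := hpartial.hasFDerivAt.comp_hasDerivAt_of_eq t (hu.prodMk (hasDerivAt_id' t)) rfl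
  have hint : IntervalIntegrable (f' (u t)) volume a t :=
    (hf'.uncurry_left _).intervalIntegrable _ _
  refine hcomp.congr_deriv ?_
  simp [ContinuousLinearMap.intervalIntegral_apply hint, add_comm]

end ParametricIntegral

section Decay

theorem rpow_neg_le_mul_rpow_neg {κ u v b e : ℝ} (hκ : 0 < κ) (hκ1 : κ ≤ 1) (hu : 0 < u)
    (huv : κ * u ≤ v) (he : 0 ≤ e) (heb : e ≤ b) : v ^ (-e) ≤ κ ^ (-b) * u ^ (-e) :=
  calc v ^ (-e) ≤ (κ * u) ^ (-e) :=
        Real.rpow_le_rpow_of_nonpos (mul_pos hκ hu) huv (neg_nonpos.2 he)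
    _ = κ ^ (-e) * u ^ (-e) := Real.mul_rpow hκ.le hu.le
    _ ≤ κ ^ (-b) * u ^ (-e) := by
        gcongr ?_ * _
        exact Real.rpow_le_rpow_of_exponent_ge hκ hκ1 (neg_le_neg heb)

variable {G : Type*} [NormedAddCommGroup G] [NormedSpace ℝ G] {w w' : ℝ → G} {A e r τ : ℝ}

theorem norm_sub_le_of_norm_deriv_le_rpow_neg (hr : 0 ≤ r) (hrτ : r ≤ τ) (he : e ≠ 1)
    (hw : ∀ s ∈ Set.Icc r τ, HasDerivAt w (w' s) s)
    (hw' : ∀ s ∈ Set.Icc r τ, ‖w' s‖ ≤ A * (1 + s) ^ (-e)) :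
    ‖w τ - w r‖ ≤ A * (((1 + τ) ^ (1 - e) - (1 + r) ^ (1 - e)) / (1 - e)) := by
  have hprimitive : ∀ s, r ≤ s →
      HasDerivAt (fun s => A * (((1 + s) ^ (1 - e) - (1 + r) ^ (1 - e)) / (1 - e)))
        (A * (1 + s) ^ (-e)) s := by
    intro s hs
    have hpow := ((hasDerivAt_id s).const_add 1).rpow_const (p := 1 - e)
      (Or.inl (show 1 + s ≠ 0 by linarith))
    refine (((hpow.sub_const _).div_const (1 - e)).const_mul A).congr_deriv ?_
    have : 1 - e ≠ 0 := sub_ne_zero.2 he.symm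
    rw [show 1 - e - 1 = -e by ring, id]
    field_simp
  exact image_norm_le_of_norm_deriv_right_le_deriv_boundary' (f := fun s => w s - w r)
    (fun s hs => ((hw s hs).sub_const _).continuousAt.continuousWithinAt)
    (fun s hs => ((hw s (Set.Ico_subset_Icc_self hs)).sub_const _).hasDerivWithinAt) (by simp)
    (fun s hs => (hprimitive s hs.1).continuousAt.continuousWithinAt)
    (fun s hs => (hprimitive s hs.1).hasDerivWithinAt)
    (fun s hs => hw' s (Set.Ico_subset_Icc_self hs)) (Set.right_mem_Icc.2 hrτ)

theorem norm_sub_le_of_norm_deriv_le_rpow_neg_of_lt_one (hA : 0 ≤ A) (hr : 0 ≤ r) (hrτ : r ≤ τ)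
    (he : e < 1) (hw : ∀ s ∈ Set.Icc r τ, HasDerivAt w (w' s) s)
    (hw' : ∀ s ∈ Set.Icc r τ, ‖w' s‖ ≤ A * (1 + s) ^ (-e)) :
    ‖w τ - w r‖ ≤ A / (1 - e) * (1 + τ) ^ (1 - e) := by
  refine (norm_sub_le_of_norm_deriv_le_rpow_neg hr hrτ he.ne hw hw').trans ?_
  have : 0 < 1 - e := sub_pos.2 he
  rw [div_mul_eq_mul_div, ← mul_div_assoc]
  gcongr
  exact sub_le_self _ (by positivity)

theorem norm_sub_le_of_norm_deriv_le_rpow_neg_of_one_lt (hA : 0 ≤ A) (hr : 0 ≤ r) (hrτ : r ≤ τ)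
    (he : 1 < e) (hw : ∀ s ∈ Set.Icc r τ, HasDerivAt w (w' s) s)
    (hw' : ∀ s ∈ Set.Icc r τ, ‖w' s‖ ≤ A * (1 + s) ^ (-e)) :
    ‖w τ - w r‖ ≤ A / (e - 1) * (1 + r) ^ (1 - e) := by
  refine (norm_sub_le_of_norm_deriv_le_rpow_neg hr hrτ he.ne' hw hw').trans ?_
  have : 0 < e - 1 := sub_pos.2 he
  rw [← neg_sub e 1, div_neg, ← neg_div, neg_sub, div_mul_eq_mul_div, ← mul_div_assoc]
  gcongr
  have : 0 ≤ (1 + τ) ^ (-(e - 1)) := Real.rpow_nonneg (by linarith) _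
  linarith

end Decay

section Symbols

variable {F G : Type*} [NormedAddCommGroup F] [NormedSpace ℝ F]
  [NormedAddCommGroup G] [NormedSpace ℝ G]

/-- `h` is on `A` a symbol of order `-e` in the position variable, as far as first derivatives are
concerned. The weight is `1 + ‖x‖` rather than the equivalent Japanese bracket. -/
structure IsSymbolOn (A : Set F) (K e : ℝ) (h : F → G) : Prop where
  nonneg : 0 ≤ K
  contDiff : ContDiff ℝ 1 h
  norm_le : ∀ x ∈ A, ‖h x‖ ≤ K * (1 + ‖x‖) ^ (-e)
  norm_fderiv_le : ∀ x ∈ A, ‖fderiv ℝ h x‖ ≤ K * (1 + ‖x‖) ^ (-(1 + e))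

/-- `f` is on the subset `U` of phase space a symbol of order `-e`, as far as first derivatives are
concerned: a derivative in the position `z.1` gains one power of decay, a derivative in the momentum
`z.2` gains nothing. -/
structure IsPhaseSymbolOn (U : Set (F × F)) (K e : ℝ) (f : F × F → G) : Prop where
  nonneg : 0 ≤ K
  contDiff : ContDiff ℝ 1 f
  norm_le : ∀ z ∈ U, ‖f z‖ ≤ K * (1 + ‖z.1‖) ^ (-e)
  norm_fderiv_le : ∀ z ∈ U, ∀ v w, ‖fderiv ℝ f z (v, w)‖ ≤
    K * ((1 + ‖z.1‖) ^ (-(1 + e)) * ‖v‖ + (1 + ‖z.1‖) ^ (-e) * ‖w‖)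

variable {A : Set F} {U : Set (F × F)} {K K' e e' : ℝ}

theorem IsSymbolOn.mono_order {h : F → G} (hh : IsSymbolOn A K e h) (he : e' ≤ e) :
    IsSymbolOn A K e' h where
  nonneg := hh.nonneg
  contDiff := hh.contDiff
  norm_le x hx := (hh.norm_le x hx).trans <| by
    have := hh.nonneg
    gcongr
    exact le_add_of_nonneg_right (norm_nonneg x)
  norm_fderiv_le x hx := (hh.norm_fderiv_le x hx).trans <| by
    have := hh.nonneg
    gcongr
    exact le_add_of_nonneg_right (norm_nonneg x)

theorem norm_smul_le_mul_rpow_neg_add_two {v : G} {ε B ρ u : ℝ} (hK : 0 ≤ K) (hε : 0 ≤ ε)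
    (hu : 0 < u) (huρ : u ≤ ρ) (hB : ε * ρ ^ 2 ≤ B) (hv : ‖v‖ ≤ K * u ^ (-e)) :
    ‖ε • v‖ ≤ K * B * u ^ (-(e + 2)) :=
  calc ‖ε • v‖ ≤ ε * (K * u ^ (-e)) := by
        rw [norm_smul, Real.norm_of_nonneg hε]
        gcongr
    _ = K * (ε * u ^ 2) * u ^ (-(e + 2)) := by
        rw [show -e = 2 + -(e + 2) by ring, Real.rpow_add hu, Real.rpow_ofNat]
        ring
    _ ≤ K * B * u ^ (-(e + 2)) := by
        gcongr
        exact hB.trans' (by gcongr)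

theorem IsSymbolOn.const_smul_closedBall {h : F → G} {ε B ρ : ℝ} (hh : IsSymbolOn Set.univ K e h)
    (hε : 0 ≤ ε) (hB : ε * (1 + ρ) ^ 2 ≤ B) :
    IsSymbolOn (Metric.closedBall 0 ρ) (K * B) (e + 2) (fun x => ε • h x) where
  nonneg := mul_nonneg hh.nonneg ((by positivity : 0 ≤ ε * (1 + ρ) ^ 2).trans hB)
  contDiff := contDiff_const.smul hh.contDiff
  norm_le x hx := norm_smul_le_mul_rpow_neg_add_two hh.nonneg hε (by positivity)
    (add_le_add_right (mem_closedBall_zero_iff.1 hx) 1) hB (hh.norm_le x trivial)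
  norm_fderiv_le x hx := by
    rw [fderiv_fun_const_smul (hh.contDiff.differentiable one_ne_zero x), ← add_assoc]
    exact norm_smul_le_mul_rpow_neg_add_two hh.nonneg hε (by positivity)
      (add_le_add_right (mem_closedBall_zero_iff.1 hx) 1) hB (hh.norm_fderiv_le x trivial)

theorem IsPhaseSymbolOn.mono {U' : Set (F × F)} {f : F × F → G} (hf : IsPhaseSymbolOn U K e f)
    (hU : U' ⊆ U) (hK : K ≤ K') : IsPhaseSymbolOn U' K' e f where
  nonneg := hf.nonneg.trans hK
  contDiff := hf.contDiff
  norm_le z hz := (hf.norm_le z (hU hz)).trans (by gcongr)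
  norm_fderiv_le z hz v w := (hf.norm_fderiv_le z (hU hz) v w).trans (by gcongr)

theorem IsPhaseSymbolOn.mono_order {f : F × F → G} (hf : IsPhaseSymbolOn U K e f)
    (he : e' ≤ e) : IsPhaseSymbolOn U K e' f where
  nonneg := hf.nonneg
  contDiff := hf.contDiff
  norm_le z hz := (hf.norm_le z hz).trans <| by
    have := hf.nonneg
    gcongr
    exact le_add_of_nonneg_right (norm_nonneg z.1)
  norm_fderiv_le z hz v w := (hf.norm_fderiv_le z hz v w).trans <| by
    have := hf.nonneg
    have : 1 ≤ 1 + ‖z.1‖ := le_add_of_nonneg_right (norm_nonneg z.1)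
    gcongr

theorem IsPhaseSymbolOn.add {f g : F × F → G} (hf : IsPhaseSymbolOn U K e f)
    (hg : IsPhaseSymbolOn U K' e g) : IsPhaseSymbolOn U (K + K') e (fun z => f z + g z) where
  nonneg := add_nonneg hf.nonneg hg.nonneg
  contDiff := hf.contDiff.add hg.contDiff
  norm_le z hz := by
    rw [add_mul]
    exact norm_add_le_of_le (hf.norm_le z hz) (hg.norm_le z hz)
  norm_fderiv_le z hz v w := by
    rw [fderiv_fun_add (hf.contDiff.differentiable one_ne_zero z)
      (hg.contDiff.differentiable one_ne_zero z), add_mul]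
    exact norm_add_le_of_le (hf.norm_fderiv_le z hz v w) (hg.norm_fderiv_le z hz v w)

theorem isPhaseSymbolOn_sum {ι : Type*} {s : Finset ι} {K : ι → ℝ} {f : ι → F × F → G}
    (hf : ∀ i ∈ s, IsPhaseSymbolOn U (K i) e (f i)) :
    IsPhaseSymbolOn U (∑ i ∈ s, K i) e (fun z => ∑ i ∈ s, f i z) where
  nonneg := Finset.sum_nonneg fun i hi => (hf i hi).nonneg
  contDiff := ContDiff.sum fun i hi => (hf i hi).contDiff
  norm_le z hz := by
    rw [Finset.sum_mul]
    exact norm_sum_le_of_le s fun i hi => (hf i hi).norm_le z hz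
  norm_fderiv_le z hz v w := by
    rw [fderiv_fun_sum fun i hi => (hf i hi).contDiff.differentiable one_ne_zero z,
      sum_apply, Finset.sum_mul]
    exact norm_sum_le_of_le s fun i hi => (hf i hi).norm_fderiv_le z hz v w

theorem IsSymbolOn.comp_fst {h : F → G} (hh : IsSymbolOn A K e h) (B : Set F) :
    IsPhaseSymbolOn (A ×ˢ B) K e (fun z => h z.1) where
  nonneg := hh.nonneg
  contDiff := hh.contDiff.comp contDiff_fst
  norm_le z hz := hh.norm_le z.1 hz.1
  norm_fderiv_le z hz v w := by
    have hderiv := HasFDerivAt.comp z (hh.contDiff.differentiable one_ne_zero z.1).hasFDerivAt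
      hasFDerivAt_fst
    rw [show fderiv ℝ (fun z : F × F => h z.1) z = _ from hderiv.fderiv, mul_add, ← mul_assoc]
    refine le_add_of_le_of_nonneg
      ((fderiv ℝ h z.1).le_of_opNorm_le (hh.norm_fderiv_le z.1 hz.1) v) ?_
    have := hh.nonneg
    positivity

theorem exists_norm_le_and_norm_fderiv_le_closedBall [ProperSpace F] {g : F → G}
    (hg : ContDiff ℝ 1 g) (M : ℝ) :
    ∃ N, 0 ≤ N ∧ ∀ x ∈ Metric.closedBall 0 M, ‖g x‖ ≤ N ∧ ‖fderiv ℝ g x‖ ≤ N := by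
  obtain ⟨N₀, hN₀⟩ := (isCompact_closedBall (0 : F) M).exists_bound_of_continuousOn
    hg.continuous.continuousOn
  obtain ⟨N₁, hN₁⟩ := (isCompact_closedBall (0 : F) M).exists_bound_of_continuousOn
    (hg.continuous_fderiv one_ne_zero).continuousOn
  exact ⟨max (max N₀ N₁) 0, le_max_right _ _, fun x hx =>
    ⟨(hN₀ x hx).trans (by simp), (hN₁ x hx).trans (by simp)⟩⟩

theorem IsSymbolOn.exists_isPhaseSymbolOn_bilin [ProperSpace F] {G₁ G₂ : Type*}
    [NormedAddCommGroup G₁] [NormedSpace ℝ G₁] [NormedAddCommGroup G₂] [NormedSpace ℝ G₂]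
    (B : G₁ →L[ℝ] G₂ →L[ℝ] G) {g : F → G₁} {h : F → G₂} (hh : IsSymbolOn A K e h)
    (hg : ContDiff ℝ 1 g) (M : ℝ) :
    ∃ N, IsPhaseSymbolOn (A ×ˢ Metric.closedBall 0 M) N e (fun z => B (g z.2) (h z.1)) := by
  obtain ⟨N, hN0, hN⟩ := exists_norm_le_and_norm_fderiv_le_closedBall hg M
  have hK := hh.nonneg
  refine ⟨‖B‖ * N * K, by positivity, ?_, fun z hz => ?_, fun z hz v w => ?_⟩
  · exact B.isBoundedBilinearMap.contDiff.comp
      ((hg.comp contDiff_snd).prodMk (hh.contDiff.comp contDiff_fst))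
  · refine (B.le_opNorm₂ _ _).trans ?_
    rw [mul_assoc (_ * _)]
    gcongr
    · exact (hN _ hz.2).1
    · exact hh.norm_le _ hz.1
  · have hderiv : HasFDerivAt (fun z : F × F => B (g z.2) (h z.1)) _ z :=
      B.hasFDerivAt_of_bilinear
        ((hg.differentiable one_ne_zero z.2).hasFDerivAt.comp z hasFDerivAt_snd)
        ((hh.contDiff.differentiable one_ne_zero z.1).hasFDerivAt.comp z hasFDerivAt_fst)
    have hposition : ‖B (g z.2) (fderiv ℝ h z.1 v)‖ ≤
        ‖B‖ * N * (K * (1 + ‖z.1‖) ^ (-(1 + e)) * ‖v‖) := by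
      refine (B.le_opNorm₂ _ _).trans ?_
      gcongr
      · exact (hN _ hz.2).1
      · exact (fderiv ℝ h z.1).le_of_opNorm_le (hh.norm_fderiv_le _ hz.1) v
    have hmomentum : ‖B (fderiv ℝ g z.2 w) (h z.1)‖ ≤
        ‖B‖ * (N * ‖w‖) * (K * (1 + ‖z.1‖) ^ (-e)) := by
      refine (B.le_opNorm₂ _ _).trans ?_
      gcongr
      · exact (fderiv ℝ g z.2).le_of_opNorm_le (hN _ hz.2).2 w
      · exact hh.norm_le _ hz.1
    rw [hderiv.fderiv]
    refine (norm_add_le_of_le hposition hmomentum).trans_eq ?_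
    ring

theorem IsPhaseSymbolOn.norm_sub_le {f : F × F → G} (hf : IsPhaseSymbolOn U K e f)
    (hU : Convex ℝ U) (he : -1 ≤ e) {x x' ξ : F} (hx : (x, ξ) ∈ U) (hx' : (x', ξ) ∈ U) {b : ℝ}
    (hb : 0 < b) (hseg : ∀ z ∈ segment ℝ x x', b ≤ 1 + ‖z‖) :
    ‖f (x, ξ) - f (x', ξ)‖ ≤ K * b ^ (-(1 + e)) * ‖x - x'‖ := by
  have hmem : ∀ z ∈ segment ℝ x x', (z, ξ) ∈ U := fun z hz =>
    hU.segment_subset hx hx' (Prod.image_mk_segment_left (𝕜 := ℝ) x x' ξ ▸ ⟨z, hz, rfl⟩)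
  refine Convex.norm_image_sub_le_of_norm_hasFDerivWithin_le (f := fun z => f (z, ξ))
    (f' := fun z => (fderiv ℝ f (z, ξ)).comp (ContinuousLinearMap.inl ℝ F F)) (fun z _ => ?_)
    (fun z hz => ?_) (convex_segment x x') (right_mem_segment ℝ x x') (left_mem_segment ℝ x x')
  · exact ((hf.contDiff.differentiable one_ne_zero _).hasFDerivAt.comp z
      (hasFDerivAt_prodMk_left z ξ)).hasFDerivWithinAt
  · have hK := hf.nonneg
    refine ContinuousLinearMap.opNorm_le_bound _ (by positivity) fun v => ?_
    refine (hf.norm_fderiv_le _ (hmem z hz) v 0).trans ?_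
    rw [norm_zero, mul_zero, add_zero, ← mul_assoc]
    gcongr ?_ * ?_ * _
    exact Real.rpow_le_rpow_of_nonpos hb (hseg z hz) (by linarith)

end Symbols

section DollardDrift

variable {F : Type*} [NormedAddCommGroup F] [NormedSpace ℝ F] {P Q : F × F → F}

/-- The `ξ`-gradient of the energy `p(sξ, ξ)` along the free ray `s ↦ sξ`, for a Hamiltonian `p`
with `∂p/∂ξ = ξ + P` and `∂p/∂x = Q`. -/
def dollardVelocity (P Q : F × F → F) (ξ : F) (s : ℝ) : F :=
  ξ + P (s • ξ, ξ) + s • Q (s • ξ, ξ)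

/-- The `ξ`-gradient of the Dollard phase `∫₀ᵗ p(sξ, ξ) ds`, for `p` as in `dollardVelocity`. -/
def dollardDrift (P Q : F × F → F) (t : ℝ) (ξ : F) : F :=
  ∫ s in (0 : ℝ)..t, dollardVelocity P Q ξ s

/-- The derivative of `dollardVelocity P Q ξ s` in `ξ`. -/
def dollardVelocityDeriv (P Q : F × F → F) (ξ : F) (s : ℝ) : F →L[ℝ] F :=
  let ray := s • ContinuousLinearMap.inl ℝ F F + ContinuousLinearMap.inr ℝ F F
  ContinuousLinearMap.id ℝ F + (fderiv ℝ P (s • ξ, ξ)).comp ray +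
    s • (fderiv ℝ Q (s • ξ, ξ)).comp ray

theorem dollardVelocityDeriv_apply (ξ u : F) (s : ℝ) :
    dollardVelocityDeriv P Q ξ s u =
      u + fderiv ℝ P (s • ξ, ξ) (s • u, u) + s • fderiv ℝ Q (s • ξ, ξ) (s • u, u) := by
  have hray : (s • ContinuousLinearMap.inl ℝ F F + ContinuousLinearMap.inr ℝ F F) u = (s • u, u) :=
    by simp
  rw [← hray]
  rfl

theorem continuous_dollardVelocity (hP : Continuous P) (hQ : Continuous Q) :
    Continuous (dollardVelocity P Q).uncurry := by
  unfold dollardVelocity Function.uncurry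
  fun_prop

theorem continuous_dollardVelocityDeriv (hP : ContDiff ℝ 1 P) (hQ : ContDiff ℝ 1 Q) :
    Continuous (dollardVelocityDeriv P Q).uncurry := by
  have := hP.continuous_fderiv one_ne_zero
  have := hQ.continuous_fderiv one_ne_zero
  unfold dollardVelocityDeriv Function.uncurry
  fun_prop

theorem hasFDerivAt_dollardVelocity (hP : Differentiable ℝ P) (hQ : Differentiable ℝ Q)
    (ξ : F) (s : ℝ) :
    HasFDerivAt (dollardVelocity P Q · s) (dollardVelocityDeriv P Q ξ s) ξ := by
  have hray : HasFDerivAt (fun ξ : F => (s • ξ, ξ))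
      (s • ContinuousLinearMap.inl ℝ F F + ContinuousLinearMap.inr ℝ F F) ξ :=
    (((hasFDerivAt_id ξ).const_smul s).prodMk (hasFDerivAt_id ξ)).congr_fderiv (by ext <;> simp)
  exact ((hasFDerivAt_id ξ).add ((hP _).hasFDerivAt.comp ξ hray)).add
    (((hQ _).hasFDerivAt.comp ξ hray).const_smul s)

theorem hasDerivAt_dollardDrift [ProperSpace F] (hP : ContDiff ℝ 1 P) (hQ : ContDiff ℝ 1 Q)
    {η : ℝ → F} {u : F} {t : ℝ} (hη : HasDerivAt η u t) :
    HasDerivAt (fun r => dollardDrift P Q r (η r)) (dollardVelocity P Q (η t) t +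
      ∫ s in (0 : ℝ)..t, dollardVelocityDeriv P Q (η t) s u) t := by
  have : CompleteSpace F := complete_of_proper
  exact hasDerivAt_intervalIntegral_of_continuous hη
    (continuous_dollardVelocity hP.continuous hQ.continuous)
    (continuous_dollardVelocityDeriv hP hQ)
    (hasFDerivAt_dollardVelocity (hP.differentiable one_ne_zero) (hQ.differentiable one_ne_zero)) 0

end DollardDrift

section Geometry

variable {F : Type*} [NormedAddCommGroup F] [NormedSpace ℝ F] {κ s : ℝ}

theorem half_mul_le_one_add_norm_of_mem_segment {x x' z : F}
    (hx : κ * (1 + s) ≤ 1 + ‖x‖) (hxx' : ‖x - x'‖ ≤ κ / 2 * (1 + s)) (hz : z ∈ segment ℝ x x') :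
    κ / 2 * (1 + s) ≤ 1 + ‖z‖ := by
  have hdist : ‖z - x‖ ≤ ‖x' - x‖ := norm_sub_le_of_mem_segment hz
  have := norm_sub_norm_le x z
  rw [norm_sub_rev x' x] at hdist
  rw [norm_sub_rev x z] at this
  linarith

theorem mul_one_add_le_one_add_norm_smul (hκ1 : κ ≤ 1) {ξ : F}
    (hξ : κ * (1 + s) ≤ 1 + ‖s • ξ‖) {σ : ℝ} (hσ : σ ∈ Set.Icc 0 s) :
    κ * (1 + σ) ≤ 1 + ‖σ • ξ‖ := by
  rw [norm_smul, Real.norm_of_nonneg (hσ.1.trans hσ.2)] at hξ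
  rw [norm_smul, Real.norm_of_nonneg hσ.1]
  rcases le_total κ ‖ξ‖ with h | h
  · nlinarith [mul_le_mul_of_nonneg_left h hσ.1]
  · nlinarith [mul_le_mul_of_nonneg_right h (sub_nonneg.2 hσ.2)]

end Geometry

theorem mul_rpow_neg_one_add_le {s : ℝ} (hs : 0 ≤ s) (e : ℝ) :
    s * (1 + s) ^ (-(1 + e)) ≤ (1 + s) ^ (-e) := by
  have hs1 : 0 < 1 + s := by linarith
  calc s * (1 + s) ^ (-(1 + e)) ≤ (1 + s) * (1 + s) ^ (-(1 + e)) := by gcongr; linarith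
    _ = (1 + s) ^ (-e) := by
        nth_rw 1 [← Real.rpow_one (1 + s)]
        rw [← Real.rpow_add hs1]
        ring_nf

theorem norm_smul_le_mul_rpow_neg {F : Type*} [NormedAddCommGroup F] [NormedSpace ℝ F] {s A e : ℝ}
    {v : F} (hs : 0 ≤ s) (hA : 0 ≤ A) (hv : ‖v‖ ≤ A * (1 + s) ^ (-(1 + e))) :
    ‖s • v‖ ≤ A * (1 + s) ^ (-e) :=
  calc ‖s • v‖ = s * ‖v‖ := by rw [norm_smul, Real.norm_of_nonneg hs]
    _ ≤ s * (A * (1 + s) ^ (-(1 + e))) := by gcongr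
    _ = A * (s * (1 + s) ^ (-(1 + e))) := by ring
    _ ≤ A * (1 + s) ^ (-e) := by
        gcongr
        exact mul_rpow_neg_one_add_le hs e

theorem norm_le_mul_one_add_of_rpow {F : Type*} [NormedAddCommGroup F] {s B δ μ : ℝ} {v : F}
    (hs : 0 < 1 + s) (hv : ‖v‖ ≤ B * (1 + s) ^ (1 - μ)) (hB : B * (1 + s) ^ (-μ) ≤ δ) :
    ‖v‖ ≤ δ * (1 + s) :=
  calc ‖v‖ ≤ B * (1 + s) ^ (1 - μ) := hv
    _ = B * (1 + s) ^ (-μ) * (1 + s) := by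
        rw [sub_eq_neg_add, Real.rpow_add hs, Real.rpow_one, mul_assoc]
    _ ≤ δ * (1 + s) := by gcongr

/-- A motion `y' = η + P(y, η)`, `η' = -(Q(y, η) + S)` on the time interval `[0, L]`, where `P` and
`Q` are symbols, the force `S` is of short range, and the position escapes with speed at least
`κ`. The phase space region `U` is only required to contain the motion and the free motions
`σ ↦ (ση(s), η(s))`, so that it may depend on parameters while `K` does not. -/
structure IsEscapingMotion {F : Type*} [NormedAddCommGroup F] [NormedSpace ℝ F] (U : Set (F × F))
    (μ K κ L : ℝ) (P Q : F × F → F) (S y η : ℝ → F) : Prop where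
  half_lt : 1 / 2 < μ
  lt_one : μ < 1
  pos : 0 < κ
  le_one : κ ≤ 1
  convex : Convex ℝ U
  velocity : IsPhaseSymbolOn U K μ P
  force : IsPhaseSymbolOn U K (1 + μ) Q
  hasDerivAt_position : ∀ s ∈ Set.Icc 0 L, HasDerivAt y (η s + P (y s, η s)) s
  hasDerivAt_momentum : ∀ s ∈ Set.Icc 0 L, HasDerivAt η (-(Q (y s, η s) + S s)) s
  norm_shortRange_le : ∀ s ∈ Set.Icc 0 L, ‖S s‖ ≤ K * (1 + ‖y s‖) ^ (-(1 + 2 * μ))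
  escape : ∀ s ∈ Set.Icc 0 L, κ * (1 + s) ≤ 1 + ‖y s‖
  mem : ∀ s ∈ Set.Icc 0 L, (y s, η s) ∈ U
  ray_mem : ∀ s ∈ Set.Icc 0 L, ∀ σ ∈ Set.Icc 0 s, (σ • η s, η s) ∈ U

namespace IsEscapingMotion

variable {F : Type*} [NormedAddCommGroup F] [NormedSpace ℝ F] {U : Set (F × F)}
  {μ K κ L B s : ℝ} {P Q : F × F → F} {S y η : ℝ → F}

theorem rpow_neg_le (h : IsEscapingMotion U μ K κ L P Q S y η) (hs : s ∈ Set.Icc 0 L) {e : ℝ}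
    (he : 0 ≤ e) (he3 : e ≤ 3) : (1 + ‖y s‖) ^ (-e) ≤ κ ^ (-3 : ℝ) * (1 + s) ^ (-e) :=
  rpow_neg_le_mul_rpow_neg h.pos h.le_one (by linarith [hs.1]) (h.escape s hs) he he3

theorem norm_velocity_le (h : IsEscapingMotion U μ K κ L P Q S y η) (hs : s ∈ Set.Icc 0 L) :
    ‖P (y s, η s)‖ ≤ K * κ ^ (-3 : ℝ) * (1 + s) ^ (-μ) := by
  refine (h.velocity.norm_le _ (h.mem s hs)).trans ?_
  rw [mul_assoc]
  exact mul_le_mul_of_nonneg_left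
    (h.rpow_neg_le hs (by linarith [h.half_lt]) (by linarith [h.lt_one])) h.velocity.nonneg

theorem norm_shortRange_le_rpow (h : IsEscapingMotion U μ K κ L P Q S y η)
    (hs : s ∈ Set.Icc 0 L) : ‖S s‖ ≤ K * κ ^ (-3 : ℝ) * (1 + s) ^ (-(1 + 2 * μ)) := by
  refine (h.norm_shortRange_le s hs).trans ?_
  rw [mul_assoc]
  exact mul_le_mul_of_nonneg_left
    (h.rpow_neg_le hs (by linarith [h.half_lt]) (by linarith [h.lt_one])) h.velocity.nonneg

theorem norm_totalForce_le (h : IsEscapingMotion U μ K κ L P Q S y η) (hs : s ∈ Set.Icc 0 L) :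
    ‖Q (y s, η s) + S s‖ ≤ 2 * K * κ ^ (-3 : ℝ) * (1 + s) ^ (-(1 + μ)) := by
  have hK := h.velocity.nonneg
  have hκ := h.pos
  have hs0 := hs.1
  have hQ : ‖Q (y s, η s)‖ ≤ K * (κ ^ (-3 : ℝ) * (1 + s) ^ (-(1 + μ))) :=
    (h.force.norm_le _ (h.mem s hs)).trans <| mul_le_mul_of_nonneg_left
      (h.rpow_neg_le hs (by linarith [h.half_lt]) (by linarith [h.lt_one])) hK
  have hS : ‖S s‖ ≤ K * κ ^ (-3 : ℝ) * (1 + s) ^ (-(1 + μ)) :=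
    (h.norm_shortRange_le_rpow hs).trans <| by
      gcongr
      · linarith
      · linarith [h.half_lt]
  refine (norm_add_le_of_le hQ hS).trans_eq ?_
  ring

theorem norm_sub_smul_le (h : IsEscapingMotion U μ K κ L P Q S y η) (hs : s ∈ Set.Icc 0 L) :
    ‖y s - s • η s‖ ≤ (‖y 0‖ + 3 * K * κ ^ (-3 : ℝ) / (1 - μ)) * (1 + s) ^ (1 - μ) := by
  have hK := h.velocity.nonneg
  have hκ := h.pos
  have hμ := sub_pos.2 h.lt_one
  have hsub : Set.Icc 0 s ⊆ Set.Icc 0 L := Set.Icc_subset_Icc_right hs.2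
  have hderiv : ∀ σ ∈ Set.Icc 0 s, HasDerivAt (fun σ => y σ - σ • η σ)
      (P (y σ, η σ) + σ • (Q (y σ, η σ) + S σ)) σ := fun σ hσ =>
    ((h.hasDerivAt_position σ (hsub hσ)).sub
      ((hasDerivAt_id σ).smul (h.hasDerivAt_momentum σ (hsub hσ)))).congr_deriv (by
        simp only [id, one_smul, smul_neg]; abel)
  have hbound : ∀ σ ∈ Set.Icc 0 s, ‖P (y σ, η σ) + σ • (Q (y σ, η σ) + S σ)‖ ≤
      3 * K * κ ^ (-3 : ℝ) * (1 + σ) ^ (-μ) := by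
    intro σ hσ
    exact (norm_add_le_of_le (h.norm_velocity_le (hsub hσ)) (norm_smul_le_mul_rpow_neg hσ.1
      (by positivity) (h.norm_totalForce_le (hsub hσ)))).trans_eq (by ring)
  have hvariation := norm_sub_le_of_norm_deriv_le_rpow_neg_of_lt_one (by positivity) le_rfl hs.1
    h.lt_one hderiv hbound
  have hone : 1 ≤ (1 + s) ^ (1 - μ) := Real.one_le_rpow (by linarith [hs.1]) hμ.le
  rw [zero_smul, sub_zero] at hvariation
  calc ‖y s - s • η s‖ ≤ ‖y 0‖ + ‖y s - s • η s - y 0‖ := norm_le_insert' _ _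
    _ ≤ ‖y 0‖ * (1 + s) ^ (1 - μ) + 3 * K * κ ^ (-3 : ℝ) / (1 - μ) * (1 + s) ^ (1 - μ) :=
        add_le_add (le_mul_of_one_le_right (norm_nonneg _) hone) hvariation
    _ = _ := by ring

theorem norm_symbol_sub_le (h : IsEscapingMotion U μ K κ L P Q S y η) (hs : s ∈ Set.Icc 0 L)
    (hB : ‖y s - s • η s‖ ≤ B * (1 + s) ^ (1 - μ)) (hsmall : B * (1 + s) ^ (-μ) ≤ κ / 2)
    {f : F × F → F} {e : ℝ} (hf : IsPhaseSymbolOn U K e f) (he : 0 ≤ e) (he2 : e ≤ 2) :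
    ‖f (y s, η s) - f (s • η s, η s)‖ ≤ K * (κ / 2) ^ (-3 : ℝ) * B * (1 + s) ^ (-(e + μ)) := by
  have hκ := h.pos
  have hs1 : 0 < 1 + s := by linarith [hs.1]
  have hclose := norm_le_mul_one_add_of_rpow hs1 hB hsmall
  have hlipschitz := hf.norm_sub_le h.convex (by linarith) (h.mem s hs)
    (h.ray_mem s hs s (Set.right_mem_Icc.2 hs.1)) (b := κ / 2 * (1 + s)) (by positivity)
    fun z hz => half_mul_le_one_add_norm_of_mem_segment (h.escape s hs) hclose hz
  have hK := h.velocity.nonneg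
  calc ‖f (y s, η s) - f (s • η s, η s)‖
      ≤ K * (κ / 2 * (1 + s)) ^ (-(1 + e)) * ‖y s - s • η s‖ := hlipschitz
    _ ≤ K * ((κ / 2) ^ (-3 : ℝ) * (1 + s) ^ (-(1 + e))) * (B * (1 + s) ^ (1 - μ)) := by
        gcongr
        exact rpow_neg_le_mul_rpow_neg (by positivity) (by linarith [h.le_one]) hs1 le_rfl
          (by linarith) (by linarith)
    _ = K * (κ / 2) ^ (-3 : ℝ) * B * ((1 + s) ^ (-(1 + e)) * (1 + s) ^ (1 - μ)) := by ring
    _ = K * (κ / 2) ^ (-3 : ℝ) * B * (1 + s) ^ (-(e + μ)) := by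
        rw [← Real.rpow_add hs1]
        ring_nf

theorem norm_fderiv_ray_le (h : IsEscapingMotion U μ K κ L P Q S y η) (hs : s ∈ Set.Icc 0 L)
    (hray : κ / 2 * (1 + s) ≤ 1 + ‖s • η s‖) {f : F × F → F} {e : ℝ} (hf : IsPhaseSymbolOn U K e f)
    (he : 0 ≤ e) (he2 : e ≤ 2) {σ : ℝ} (hσ : σ ∈ Set.Icc 0 s) (u : F) :
    ‖fderiv ℝ f (σ • η s, η s) (σ • u, u)‖ ≤
      2 * K * (κ / 2) ^ (-3 : ℝ) * ‖u‖ * (1 + σ) ^ (-e) := by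
  have hκ := h.pos
  have hK := h.velocity.nonneg
  have hσ0 := hσ.1
  have hweight : ∀ {b : ℝ}, 0 ≤ b → b ≤ 3 →
      (1 + ‖σ • η s‖) ^ (-b) ≤ (κ / 2) ^ (-3 : ℝ) * (1 + σ) ^ (-b) := fun hb hb3 =>
    rpow_neg_le_mul_rpow_neg (by positivity) (by linarith [h.le_one]) (by linarith)
      (mul_one_add_le_one_add_norm_smul (by linarith [h.le_one]) hray hσ) hb hb3
  calc ‖fderiv ℝ f (σ • η s, η s) (σ • u, u)‖
      ≤ K * ((1 + ‖σ • η s‖) ^ (-(1 + e)) * ‖σ • u‖ + (1 + ‖σ • η s‖) ^ (-e) * ‖u‖) :=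
        hf.norm_fderiv_le _ (h.ray_mem s hs σ hσ) _ _
    _ ≤ K * ((κ / 2) ^ (-3 : ℝ) * (1 + σ) ^ (-(1 + e)) * (σ * ‖u‖) +
          (κ / 2) ^ (-3 : ℝ) * (1 + σ) ^ (-e) * ‖u‖) := by
        rw [norm_smul σ u, Real.norm_of_nonneg hσ0]
        gcongr
        · exact hweight (by linarith) (by linarith)
        · exact hweight he (by linarith)
    _ = K * (κ / 2) ^ (-3 : ℝ) * ‖u‖ * (σ * (1 + σ) ^ (-(1 + e)) + (1 + σ) ^ (-e)) := by ring
    _ ≤ K * (κ / 2) ^ (-3 : ℝ) * ‖u‖ * ((1 + σ) ^ (-e) + (1 + σ) ^ (-e)) := by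
        gcongr
        exact mul_rpow_neg_one_add_le hσ0 e
    _ = 2 * K * (κ / 2) ^ (-3 : ℝ) * ‖u‖ * (1 + σ) ^ (-e) := by ring

theorem norm_dollardVelocityDeriv_sub_le (h : IsEscapingMotion U μ K κ L P Q S y η)
    (hs : s ∈ Set.Icc 0 L) (hray : κ / 2 * (1 + s) ≤ 1 + ‖s • η s‖) {σ : ℝ}
    (hσ : σ ∈ Set.Icc 0 s) (u : F) :
    ‖dollardVelocityDeriv P Q (η s) σ u - u‖ ≤
      4 * K * (κ / 2) ^ (-3 : ℝ) * ‖u‖ * (1 + σ) ^ (-μ) := by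
  have hκ := h.pos
  have hK := h.velocity.nonneg
  have hP := h.norm_fderiv_ray_le hs hray h.velocity (by linarith [h.half_lt])
    (by linarith [h.lt_one]) hσ u
  have hQ : ‖σ • fderiv ℝ Q (σ • η s, η s) (σ • u, u)‖ ≤
      2 * K * (κ / 2) ^ (-3 : ℝ) * ‖u‖ * (1 + σ) ^ (-μ) :=
    norm_smul_le_mul_rpow_neg hσ.1 (by positivity) (h.norm_fderiv_ray_le hs hray h.force
      (by linarith [h.half_lt]) (by linarith [h.lt_one]) hσ u)
  rw [dollardVelocityDeriv_apply, add_assoc, add_sub_cancel_left]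
  exact (norm_add_le_of_le hP hQ).trans_eq (by ring)

theorem norm_integral_dollardVelocityDeriv_sub_le [CompleteSpace F]
    (h : IsEscapingMotion U μ K κ L P Q S y η) (hs : s ∈ Set.Icc 0 L)
    (hray : κ / 2 * (1 + s) ≤ 1 + ‖s • η s‖) (u : F) :
    ‖∫ σ in (0 : ℝ)..s, (dollardVelocityDeriv P Q (η s) σ u - u)‖ ≤
      4 * K * (κ / 2) ^ (-3 : ℝ) * ‖u‖ / (1 - μ) * (1 + s) ^ (1 - μ) := by
  have hκ := h.pos
  have hK := h.velocity.nonneg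
  have hcont : Continuous fun σ => dollardVelocityDeriv P Q (η s) σ u - u :=
    (((continuous_dollardVelocityDeriv h.velocity.contDiff h.force.contDiff).uncurry_left
      (η s)).clm_apply continuous_const).sub continuous_const
  simpa using norm_sub_le_of_norm_deriv_le_rpow_neg_of_lt_one (by positivity) le_rfl hs.1 h.lt_one
    (fun σ _ => (hcont.integral_hasStrictDerivAt 0 σ).hasDerivAt)
    (fun σ hσ => h.norm_dollardVelocityDeriv_sub_le hs hray hσ u)

theorem norm_integral_dollardVelocityDeriv_totalForce_sub_le [CompleteSpace F]
    (h : IsEscapingMotion U μ K κ L P Q S y η) (hs : s ∈ Set.Icc 0 L)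
    (hray : κ / 2 * (1 + s) ≤ 1 + ‖s • η s‖) :
    ‖∫ σ in (0 : ℝ)..s, (dollardVelocityDeriv P Q (η s) σ (Q (y s, η s) + S s) -
      (Q (y s, η s) + S s))‖ ≤
      8 * K ^ 2 * (κ / 2) ^ (-3 : ℝ) * κ ^ (-3 : ℝ) / (1 - μ) * (1 + s) ^ (-(2 * μ)) := by
  have hκ := h.pos
  have hK := h.velocity.nonneg
  have hμ := sub_pos.2 h.lt_one
  have hs1 : 0 < 1 + s := by linarith [hs.1]
  calc _ ≤ 4 * K * (κ / 2) ^ (-3 : ℝ) * ‖Q (y s, η s) + S s‖ / (1 - μ) * (1 + s) ^ (1 - μ) :=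
        h.norm_integral_dollardVelocityDeriv_sub_le hs hray _
    _ ≤ 4 * K * (κ / 2) ^ (-3 : ℝ) * (2 * K * κ ^ (-3 : ℝ) * (1 + s) ^ (-(1 + μ))) / (1 - μ) *
          (1 + s) ^ (1 - μ) := by
        gcongr
        exact h.norm_totalForce_le hs
    _ = 8 * K ^ 2 * (κ / 2) ^ (-3 : ℝ) * κ ^ (-3 : ℝ) / (1 - μ) *
          ((1 + s) ^ (-(1 + μ)) * (1 + s) ^ (1 - μ)) := by ring
    _ = _ := by
        rw [← Real.rpow_add hs1]
        ring_nf

theorem hasDerivAt_sub_dollardDrift [ProperSpace F] (h : IsEscapingMotion U μ K κ L P Q S y η)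
    (hs : s ∈ Set.Icc 0 L) :
    HasDerivAt (fun r => y r - dollardDrift P Q r (η r))
      (P (y s, η s) - P (s • η s, η s) + s • (Q (y s, η s) - Q (s • η s, η s)) + s • S s +
        ∫ σ in (0 : ℝ)..s, (dollardVelocityDeriv P Q (η s) σ (Q (y s, η s) + S s) -
          (Q (y s, η s) + S s))) s := by
  have hcont : Continuous fun σ => dollardVelocityDeriv P Q (η s) σ (Q (y s, η s) + S s) :=
    ((continuous_dollardVelocityDeriv h.velocity.contDiff h.force.contDiff).uncurry_left
      (η s)).clm_apply continuous_const
  refine ((h.hasDerivAt_position s hs).sub (hasDerivAt_dollardDrift h.velocity.contDiff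
    h.force.contDiff (h.hasDerivAt_momentum s hs))).congr_deriv ?_
  rw [intervalIntegral.integral_sub (hcont.intervalIntegrable _ _) intervalIntegrable_const]
  simp only [dollardVelocity, map_neg, intervalIntegral.integral_neg,
    intervalIntegral.integral_const, sub_zero, smul_add, smul_sub]
  abel

theorem norm_deriv_sub_dollardDrift_le [CompleteSpace F]
    (h : IsEscapingMotion U μ K κ L P Q S y η) (hs : s ∈ Set.Icc 0 L)
    (hB : ‖y s - s • η s‖ ≤ B * (1 + s) ^ (1 - μ)) (hsmall : B * (1 + s) ^ (-μ) ≤ κ / 2) :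
    ‖P (y s, η s) - P (s • η s, η s) + s • (Q (y s, η s) - Q (s • η s, η s)) + s • S s +
        ∫ σ in (0 : ℝ)..s, (dollardVelocityDeriv P Q (η s) σ (Q (y s, η s) + S s) -
          (Q (y s, η s) + S s))‖ ≤
      (2 * K * (κ / 2) ^ (-3 : ℝ) * B + K * κ ^ (-3 : ℝ) +
        8 * K ^ 2 * (κ / 2) ^ (-3 : ℝ) * κ ^ (-3 : ℝ) / (1 - μ)) * (1 + s) ^ (-(2 * μ)) := by
  have hκ := h.pos
  have hK := h.velocity.nonneg
  have hμ := sub_pos.2 h.lt_one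
  have hμ0 := h.half_lt
  have hs0 := hs.1
  have hs1 : 0 < 1 + s := by linarith
  have hB0 : 0 ≤ B := nonneg_of_mul_nonneg_left ((norm_nonneg _).trans hB) (by positivity)
  have hray := half_mul_le_one_add_norm_of_mem_segment (h.escape s hs)
    (norm_le_mul_one_add_of_rpow hs1 hB hsmall) (right_mem_segment ℝ _ _)
  have hP : ‖P (y s, η s) - P (s • η s, η s)‖ ≤
      K * (κ / 2) ^ (-3 : ℝ) * B * (1 + s) ^ (-(2 * μ)) := by
    rw [two_mul]
    exact h.norm_symbol_sub_le hs hB hsmall h.velocity (by linarith) (by linarith)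
  have hQ : ‖s • (Q (y s, η s) - Q (s • η s, η s))‖ ≤
      K * (κ / 2) ^ (-3 : ℝ) * B * (1 + s) ^ (-(2 * μ)) := by
    refine norm_smul_le_mul_rpow_neg hs0 (by positivity) ?_
    rw [two_mul, ← add_assoc]
    exact h.norm_symbol_sub_le hs hB hsmall h.force (by linarith) (by linarith)
  have hS : ‖s • S s‖ ≤ K * κ ^ (-3 : ℝ) * (1 + s) ^ (-(2 * μ)) :=
    norm_smul_le_mul_rpow_neg hs0 (by positivity) (h.norm_shortRange_le_rpow hs)
  refine (norm_add_le_of_le (norm_add_le_of_le (norm_add_le_of_le hP hQ) hS)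
    (h.norm_integral_dollardVelocityDeriv_totalForce_sub_le hs hray)).trans_eq ?_
  ring

end IsEscapingMotion

theorem exists_norm_sub_dollardDrift_sub_le {F : Type*} [NormedAddCommGroup F] [NormedSpace ℝ F]
    [ProperSpace F] {μ κ : ℝ} (hμ : 0 < μ) (hκ : 0 < κ) (K : ℝ) (x₀ : F) :
    ∃ R₀ D, ∀ {U : Set (F × F)} {L : ℝ} {P Q : F × F → F} {S y η : ℝ → F},
      IsEscapingMotion U μ K κ L P Q S y η → y 0 = x₀ → ∀ {r τ : ℝ}, R₀ ≤ r → r ≤ τ → τ ≤ L →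
      ‖(y τ - dollardDrift P Q τ (η τ)) - (y r - dollardDrift P Q r (η r))‖ ≤
        D * (1 + r) ^ (1 - 2 * μ) := by
  have : CompleteSpace F := complete_of_proper
  set B := ‖x₀‖ + 3 * K * κ ^ (-3 : ℝ) / (1 - μ) with hB
  have hsmall : ∀ᶠ s : ℝ in atTop, B * (1 + s) ^ (-μ) ≤ κ / 2 := by
    have := ((tendsto_rpow_neg_atTop hμ).comp
      (tendsto_atTop_add_const_left _ 1 tendsto_id)).const_mul B
    rw [mul_zero] at this
    exact this.eventually_le_const (half_pos hκ)
  obtain ⟨R₀, hR₀⟩ := eventually_atTop.1 hsmall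
  refine ⟨max R₀ 0, (2 * K * (κ / 2) ^ (-3 : ℝ) * B + K * κ ^ (-3 : ℝ) +
    8 * K ^ 2 * (κ / 2) ^ (-3 : ℝ) * κ ^ (-3 : ℝ) / (1 - μ)) / (2 * μ - 1), ?_⟩
  intro U L P Q S y η h hy0 r τ hr hrτ hτ
  have hr0 := (le_max_right R₀ 0).trans hr
  have hmem : ∀ s ∈ Set.Icc r τ, s ∈ Set.Icc 0 L := fun s hs => ⟨hr0.trans hs.1, hs.2.trans hτ⟩
  have hK := h.velocity.nonneg
  have hμ1 := sub_pos.2 h.lt_one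
  refine norm_sub_le_of_norm_deriv_le_rpow_neg_of_one_lt (by positivity) hr0 hrτ
    (by linarith [h.half_lt]) (fun s hs => h.hasDerivAt_sub_dollardDrift (hmem s hs))
    fun s hs => h.norm_deriv_sub_dollardDrift_le (hmem s hs) ?_
      (hR₀ s ((le_max_left R₀ 0).trans (hr.trans hs.1)))
  rw [hB, ← hy0]
  exact h.norm_sub_smul_le (hmem s hs)

section Limits

theorem tendsto_of_forall_eventually_dist_le {ι κ α : Type*} [PseudoMetricSpace α] {l : Filter ι}
    {k : Filter κ} [k.NeBot] {f : ι → α} {f' : κ → ι → α} {g : κ → α} {x : α} {δ : κ → ℝ}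
    (hδ : Tendsto δ k (𝓝 0)) (hdist : ∀ᶠ r in k, ∀ᶠ i in l, dist (f i) (f' r i) ≤ δ r)
    (hf' : ∀ᶠ r in k, Tendsto (f' r) l (𝓝 (g r))) (hg : Tendsto g k (𝓝 x)) :
    Tendsto f l (𝓝 x) := by
  refine Metric.tendsto_nhds.2 fun ε hε => ?_
  obtain ⟨r, hr, hfr, hδr, hgr⟩ := (hdist.and <| hf'.and <|
    (hδ.eventually_lt_const (div_pos hε three_pos)).and
      (Metric.tendsto_nhds.1 hg _ (div_pos hε three_pos))).exists
  filter_upwards [hr, Metric.tendsto_nhds.1 hfr _ (div_pos hε three_pos)] with i hi hi'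
  linarith [dist_triangle4 (f i) (f' r i) (g r) x]

theorem tendsto_of_hasDerivAt_add_smul {ι F : Type*} [NormedAddCommGroup F] [NormedSpace ℝ F]
    [ProperSpace F] {l : Filter ι} {v w : F → F} (hv : ContDiff ℝ 1 v) (hw : Continuous w)
    {z : ℝ → F} {z' : ι → ℝ → F} {ε : ι → ℝ} (hε : Tendsto ε l (𝓝 0)) {R B : ℝ} (hR : 0 ≤ R)
    (hz : ∀ s ∈ Set.Icc 0 R, HasDerivAt z (v (z s)) s)
    (hz' : ∀ᶠ i in l, ∀ s ∈ Set.Icc 0 R, HasDerivAt (z' i) (v (z' i s) + ε i • w (z' i s)) s)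
    (h0 : ∀ᶠ i in l, z' i 0 = z 0) (hB : ∀ᶠ i in l, ∀ s ∈ Set.Icc 0 R, ‖z' i s‖ ≤ B) :
    Tendsto (z' · R) l (𝓝 (z R)) := by
  have hzc : ContinuousOn z (Set.Icc 0 R) := fun s hs => (hz s hs).continuousAt.continuousWithinAt
  obtain ⟨B₁, hB₁⟩ := isCompact_Icc.exists_bound_of_continuousOn hzc
  set ball := Metric.closedBall (0 : F) (max B B₁)
  have hcompact : IsCompact ball := isCompact_closedBall _ _
  obtain ⟨K, hK⟩ := hv.contDiffOn.exists_lipschitzOnWith one_ne_zero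
    (convex_closedBall (0 : F) (max B B₁)) hcompact
  obtain ⟨C, hC⟩ := hcompact.exists_bound_of_continuousOn hw.continuousOn
  have hzmem : ∀ s ∈ Set.Icc 0 R, z s ∈ ball := fun s hs =>
    mem_closedBall_zero_iff.2 ((hB₁ s hs).trans (le_max_right _ _))
  have hgronwall : ∀ᶠ i in l, dist (z' i R) (z R) ≤ gronwallBound 0 K (‖ε i‖ * C + 0) (R - 0) := by
    filter_upwards [hz', h0, hB] with i hi hi0 hiB
    have hmem : ∀ s ∈ Set.Icc 0 R, z' i s ∈ ball := fun s hs =>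
      mem_closedBall_zero_iff.2 ((hiB s hs).trans (le_max_left _ _))
    refine dist_le_of_approx_trajectories_ODE_of_mem (v := fun _ => v) (s := fun _ => ball)
      (fun _ _ => hK) (fun s hs => (hi s hs).continuousAt.continuousWithinAt)
      (fun s hs => (hi s (Set.Ico_subset_Icc_self hs)).hasDerivWithinAt) (fun s hs => ?_)
      (fun s hs => hmem s (Set.Ico_subset_Icc_self hs)) hzc
      (fun s hs => (hz s (Set.Ico_subset_Icc_self hs)).hasDerivWithinAt) (fun s _ => by simp)
      (fun s hs => hzmem s (Set.Ico_subset_Icc_self hs)) (by simp [hi0]) R (Set.right_mem_Icc.2 hR)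
    rw [dist_self_add_left, norm_smul]
    exact mul_le_mul_of_nonneg_left (hC _ (hmem s (Set.Ico_subset_Icc_self hs))) (norm_nonneg _)
  have hbound : Tendsto (fun i => gronwallBound 0 K (‖ε i‖ * C + 0) (R - 0)) l (𝓝 0) := by
    have := ((gronwallBound_continuous_ε 0 K (R - 0)).tendsto' 0 0 (gronwallBound_ε0_δ0 _ _)).comp
      (show Tendsto (fun i => ‖ε i‖ * C + 0) l (𝓝 0) by simpa using hε.norm.mul_const C)
    exact this
  exact tendsto_iff_dist_tendsto_zero.2 (squeeze_zero' (.of_forall fun _ => dist_nonneg)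
    hgronwall hbound)

end Limits

section PerturbedMotions

variable {F : Type*} [NormedAddCommGroup F] [NormedSpace ℝ F] {P Q Q' S : F × F → F}

theorem continuous_dollardDrift_add_smul (hP : Continuous P) (hQ : Continuous Q)
    (hQ' : Continuous Q') (R : ℝ) :
    Continuous fun p : ℝ × F => dollardDrift P (fun z => Q z + p.1 • Q' z) R p.2 := by
  refine intervalIntegral.continuous_parametric_intervalIntegral_of_continuous' ?_ _ _
  unfold dollardVelocity Function.uncurry
  fun_prop

theorem IsPhaseSymbolOn.norm_position_le {U : Set (F × F)} {K e L M s : ℝ} {y η : ℝ → F}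
    (hP : IsPhaseSymbolOn U K e P) (he : 0 ≤ e)
    (hy : ∀ s ∈ Set.Icc 0 L, HasDerivAt y (η s + P (y s, η s)) s)
    (hU : ∀ s ∈ Set.Icc 0 L, (y s, η s) ∈ U) (hM : ∀ s ∈ Set.Icc 0 L, ‖η s‖ ≤ M)
    (hs : s ∈ Set.Icc 0 L) : ‖y s‖ ≤ ‖y 0‖ + (M + K) * s := by
  have hL : ∀ σ ∈ Set.Icc 0 s, σ ∈ Set.Icc 0 L := fun σ hσ => ⟨hσ.1, hσ.2.trans hs.2⟩
  have hvelocity : ∀ σ ∈ Set.Icc 0 s, ‖η σ + P (y σ, η σ)‖ ≤ M + K := fun σ hσ =>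
    norm_add_le_of_le (hM σ (hL σ hσ)) <| (hP.norm_le _ (hU σ (hL σ hσ))).trans <|
      mul_le_of_le_one_right hP.nonneg <|
        Real.rpow_le_one_of_one_le_of_nonpos (by simp) (neg_nonpos.2 he)
  have hmvt := (convex_Icc (0 : ℝ) s).norm_image_sub_le_of_norm_hasDerivWithin_le
    (fun σ hσ => (hy σ (hL σ hσ)).hasDerivWithinAt) hvelocity
    (Set.left_mem_Icc.2 hs.1) (Set.right_mem_Icc.2 hs.1)
  rw [sub_zero, Real.norm_of_nonneg hs.1] at hmvt
  linarith [norm_sub_norm_le (y s) (y 0)]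

variable [ProperSpace F] {ι : Type*} {l : Filter ι} {μ K κ M : ℝ}
  {L τ ε : ι → ℝ} {y η : ι → ℝ → F} {y₀ η₀ : ℝ → F}

theorem tendsto_perturbedMotion (hP : ContDiff ℝ 1 P) (hQ : ContDiff ℝ 1 Q)
    (hQ' : Continuous Q') (hS : Continuous S)
    (hy₀ : ∀ s, 0 ≤ s → HasDerivAt y₀ (η₀ s + P (y₀ s, η₀ s)) s)
    (hη₀ : ∀ s, 0 ≤ s → HasDerivAt η₀ (-Q (y₀ s, η₀ s)) s)
    (h : ∀ᶠ i in l, ∃ U, IsEscapingMotion U μ K κ (L i) P (fun z => Q z + ε i • Q' z)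
      (fun s => ε i • S (y i s, η i s)) (y i) (η i))
    (hy0 : ∀ᶠ i in l, y i 0 = y₀ 0) (hη0 : ∀ᶠ i in l, η i 0 = η₀ 0)
    (hM : ∀ᶠ i in l, ∀ s ∈ Set.Icc 0 (L i), ‖η i s‖ ≤ M)
    (hε : Tendsto ε l (𝓝 0)) (hL : Tendsto L l atTop) {R : ℝ} (hR : 0 ≤ R) :
    Tendsto (fun i => (y i R, η i R)) l (𝓝 (y₀ R, η₀ R)) := by
  refine tendsto_of_hasDerivAt_add_smul (v := fun z => (z.2 + P z, -Q z))
    (w := fun z => (0, -(Q' z + S z))) (z := fun s => (y₀ s, η₀ s))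
    (z' := fun i s => (y i s, η i s)) (B := max (‖y₀ 0‖ + |M + K| * R) M)
    (by fun_prop) (by fun_prop) hε hR (fun s hs => (hy₀ s hs.1).prodMk (hη₀ s hs.1)) ?_ ?_ ?_
  · filter_upwards [h, hL.eventually_ge_atTop R] with i ⟨_, hi⟩ hRL s hs
    have hsL : s ∈ Set.Icc 0 (L i) := ⟨hs.1, hs.2.trans hRL⟩
    refine ((hi.hasDerivAt_position s hsL).prodMk (hi.hasDerivAt_momentum s hsL)).congr_deriv ?_
    ext1
    · simp
    · simp only [Prod.snd_add, Prod.smul_snd, smul_neg, smul_add, neg_add]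
      abel
  · filter_upwards [hy0, hη0] with i hi hi'
    rw [hi, hi']
  · filter_upwards [h, hy0, hM, hL.eventually_ge_atTop R] with i ⟨_, hi⟩ hi0 hiM hRL s hs
    have hsL : s ∈ Set.Icc 0 (L i) := ⟨hs.1, hs.2.trans hRL⟩
    rw [Prod.norm_mk, ← hi0]
    refine max_le_max ((hi.velocity.norm_position_le (by linarith [hi.half_lt])
      hi.hasDerivAt_position hi.mem hiM hsL).trans ?_) (hiM s hsL)
    have := hs.1
    gcongr
    exacts [le_abs_self _, hs.2]

theorem tendsto_sub_dollardDrift (hκ : 0 < κ) (hμ : 1 / 2 < μ) (hP : ContDiff ℝ 1 P)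
    (hQ : ContDiff ℝ 1 Q) (hQ' : Continuous Q') (hS : Continuous S)
    (hy₀ : ∀ s, 0 ≤ s → HasDerivAt y₀ (η₀ s + P (y₀ s, η₀ s)) s)
    (hη₀ : ∀ s, 0 ≤ s → HasDerivAt η₀ (-Q (y₀ s, η₀ s)) s)
    (h : ∀ᶠ i in l, ∃ U, IsEscapingMotion U μ K κ (L i) P (fun z => Q z + ε i • Q' z)
      (fun s => ε i • S (y i s, η i s)) (y i) (η i))
    (hy0 : ∀ᶠ i in l, y i 0 = y₀ 0) (hη0 : ∀ᶠ i in l, η i 0 = η₀ 0)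
    (hM : ∀ᶠ i in l, ∀ s ∈ Set.Icc 0 (L i), ‖η i s‖ ≤ M)
    (hε : Tendsto ε l (𝓝 0)) (hτ : Tendsto τ l atTop) (hτL : ∀ᶠ i in l, τ i ≤ L i)
    {x : F} (hx : Tendsto (fun s => y₀ s - dollardDrift P Q s (η₀ s)) atTop (𝓝 x)) :
    Tendsto (fun i => y i (τ i) - dollardDrift P (fun z => Q z + ε i • Q' z) (τ i) (η i (τ i)))
      l (𝓝 x) := by
  obtain ⟨R₀, D, hD⟩ :=
    exists_norm_sub_dollardDrift_sub_le (by linarith : 0 < μ) hκ K (y₀ 0)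
  refine tendsto_of_forall_eventually_dist_le (k := atTop)
    (f' := fun R i => y i R - dollardDrift P (fun z => Q z + ε i • Q' z) R (η i R))
    (δ := fun R => D * (1 + R) ^ (1 - 2 * μ)) ?_ ?_ ?_ hx
  · have := ((tendsto_rpow_neg_atTop (y := 2 * μ - 1) (by linarith)).comp
      (tendsto_atTop_add_const_left atTop 1 tendsto_id)).const_mul D
    simpa using this
  · filter_upwards [eventually_ge_atTop R₀] with R hR
    filter_upwards [h, hy0, hτL, hτ.eventually_ge_atTop R] with i ⟨_, hi⟩ hi0 hiL hRτ
    rw [dist_eq_norm]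
    exact hD hi hi0 hR hRτ hiL
  · filter_upwards [eventually_ge_atTop 0] with R hR
    have hmotion := tendsto_perturbedMotion hP hQ hQ' hS hy₀ hη₀ h hy0 hη0 hM hε
      (tendsto_atTop_mono' l hτL hτ) hR
    rw [nhds_prod_eq] at hmotion
    have hdrift := ((continuous_dollardDrift_add_smul hP.continuous hQ.continuous hQ' R).tendsto
      (0, η₀ R)).comp (hε.prodMk_nhds (tendsto_snd.comp hmotion))
    simp only [zero_smul, add_zero] at hdrift
    exact (tendsto_fst.comp hmotion).sub hdrift

end PerturbedMotions

section Hamiltonians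

variable {F : Type*} [NormedAddCommGroup F] [InnerProductSpace ℝ F]

/-- The phase `∫₀ᵗ h(sξ, ξ) ds`, of which `Φ` and `Ψ` are instances. -/
def dollardPhase (h : F → F → ℝ) (t : ℝ) (ξ : F) : ℝ :=
  ∫ s in (0 : ℝ)..t, h (s • ξ) ξ

/-- The Hamiltonian `c⁻² h(x, cξ)`, which governs the motion for `h` when time is measured in units
of `1/c` and momentum in units of `c`. -/
def rescaledHamiltonian (c : ℝ) (h : F → F → ℝ) (x ξ : F) : ℝ :=
  (c ^ 2)⁻¹ * h x (c • ξ)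

theorem dollardPhase_rescaledHamiltonian {c : ℝ} (hc : c ≠ 0) (h : F → F → ℝ) (t : ℝ) (ξ : F) :
    dollardPhase (rescaledHamiltonian c h) (c * t) ξ = c⁻¹ * dollardPhase h t (c • ξ) := by
  have hsubst := intervalIntegral.integral_comp_mul_left (a := 0) (b := t)
    (fun s => rescaledHamiltonian c h (s • ξ) ξ) hc
  rw [mul_zero, smul_eq_mul, eq_inv_mul_iff_mul_eq₀ hc] at hsubst
  rw [dollardPhase, ← hsubst]
  simp only [dollardPhase, rescaledHamiltonian, intervalIntegral.integral_const_mul, smul_smul,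
    mul_comm c]
  field_simp

theorem rescaledHamiltonian_neg_one {h : F → F → ℝ}
    (hh : ∀ x ξ, h x (-ξ) = h x ξ) :
    rescaledHamiltonian (-1) h = h := by
  ext x ξ
  simp [rescaledHamiltonian, hh]

variable [CompleteSpace F] {f g : F → ℝ} {h : F → F → ℝ}

theorem gradient_add {x : F} (hf : DifferentiableAt ℝ f x) (hg : DifferentiableAt ℝ g x) :
    gradient (fun x => f x + g x) x = gradient f x + gradient g x := by
  simp only [gradient, fderiv_fun_add hf hg, map_add]

theorem gradient_add_const (f : F → ℝ) (c : ℝ) (x : F) :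
    gradient (fun x => f x + c) x = gradient f x := by
  simp only [gradient, fderiv_add_const]

theorem gradient_const_mul (c : ℝ) (f : F → ℝ) (x : F) :
    gradient (fun x => c * f x) x = c • gradient f x := by
  have : fderiv ℝ (fun x => c * f x) x = c • fderiv ℝ f x := congrFun (fderiv_const_smul_field c) x
  simp [gradient, this]

theorem gradient_comp_smul (f : F → ℝ) (c : ℝ) (x : F) :
    gradient (fun x => f (c • x)) x = c • gradient f (c • x) := by
  simp [gradient, fderiv_comp_smul]

/-- The deviation `∂h/∂ξ - ξ` of the velocity field of a Hamiltonian `h(x, ξ)` from that of free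
motion. -/
def velocityExcess (h : F → F → ℝ) (z : F × F) : F :=
  gradient (h z.1) z.2 - z.2

/-- The partial gradient `∂h/∂x` of a Hamiltonian `h(x, ξ)`. -/
def positionGradient (h : F → F → ℝ) (z : F × F) : F :=
  gradient (h · z.2) z.1

theorem fderiv_uncurry_apply {z : F × F} (hh : DifferentiableAt ℝ h.uncurry z) (w : F × F) :
    fderiv ℝ h.uncurry z w =
      inner ℝ (positionGradient h z) w.1 + inner ℝ (z.2 + velocityExcess h z) w.2 := by
  have hx := HasFDerivAt.comp (f := fun x => (x, z.2)) z.1 hh.hasFDerivAt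
    (hasFDerivAt_prodMk_left z.1 z.2)
  have hξ := HasFDerivAt.comp (f := fun ξ => (z.1, ξ)) z.2 hh.hasFDerivAt
    (hasFDerivAt_prodMk_right z.1 z.2)
  rw [velocityExcess, add_sub_cancel, positionGradient, inner_gradient_left, inner_gradient_left,
    show fderiv ℝ (h · z.2) z.1 = _ from hx.fderiv, show fderiv ℝ (h z.1) z.2 = _ from hξ.fderiv]
  simp [← map_add]

theorem hasFDerivAt_apply_ray (hh : Differentiable ℝ h.uncurry) (s : ℝ) (ξ : F) :
    HasFDerivAt (fun ξ => h (s • ξ) ξ)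
      (innerSL ℝ (dollardVelocity (velocityExcess h) (positionGradient h) ξ s)) ξ := by
  have hray : HasFDerivAt (𝕜 := ℝ) (fun ξ : F => (s • ξ, ξ)) _ ξ :=
    ((hasFDerivAt_id ξ).const_smul s).prodMk (hasFDerivAt_id ξ)
  refine (HasFDerivAt.comp ξ (hh _).hasFDerivAt hray).congr_fderiv ?_
  ext v
  simp [fderiv_uncurry_apply (hh _), dollardVelocity, inner_add_left, inner_smul_right]
  ring

theorem gradient_dollardPhase [ProperSpace F] (hh : Differentiable ℝ h.uncurry)
    (hP : Continuous (velocityExcess h)) (hQ : Continuous (positionGradient h)) (t : ℝ) (ξ : F) :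
    gradient (dollardPhase h t) ξ = dollardDrift (velocityExcess h) (positionGradient h) t ξ := by
  have hvelocity : Continuous (dollardVelocity (velocityExcess h) (positionGradient h)).uncurry :=
    continuous_dollardVelocity hP hQ
  have hderiv := hasFDerivAt_intervalIntegral_of_continuous (f := fun ξ s => h (s • ξ) ξ)
    (f' := fun ξ s => innerSL ℝ (dollardVelocity (velocityExcess h) (positionGradient h) ξ s))
    (hh.continuous.comp (f := fun p : F × ℝ => (p.2 • p.1, p.1)) (by fun_prop))
    ((innerSL ℝ).continuous.comp hvelocity)
    (fun ξ s => hasFDerivAt_apply_ray hh s ξ) 0 t ξ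
  refine ext_inner_right ℝ fun v => ?_
  rw [inner_gradient_left, show fderiv ℝ (dollardPhase h t) ξ = _ from hderiv.fderiv,
    ContinuousLinearMap.intervalIntegral_apply, real_inner_comm]
  · simpa [real_inner_comm, dollardDrift] using (innerSL ℝ v).intervalIntegral_comp_comm
      ((hvelocity.uncurry_left ξ).intervalIntegrable 0 t)
  · exact ((innerSL ℝ).continuous.comp (hvelocity.uncurry_left ξ)).intervalIntegrable 0 t

theorem gradient_rescaledHamiltonian {c : ℝ} (hc : c ≠ 0) (h : F → F → ℝ) (x ξ : F) :
    gradient (rescaledHamiltonian c h x) ξ = c⁻¹ • gradient (h x) (c • ξ) := by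
  rw [show rescaledHamiltonian c h x = fun ξ => (c ^ 2)⁻¹ * h x (c • ξ) from rfl,
    gradient_const_mul, gradient_comp_smul, smul_smul]
  congr 1
  field_simp

theorem gradient_dollardPhase_rescaledHamiltonian {c : ℝ} (hc : c ≠ 0) (h : F → F → ℝ) (t : ℝ)
    (ξ : F) :
    gradient (dollardPhase (rescaledHamiltonian c h) (c * t)) (c⁻¹ • ξ) =
      gradient (dollardPhase h t) ξ := by
  rw [funext (dollardPhase_rescaledHamiltonian hc h t), gradient_const_mul, gradient_comp_smul,
    smul_inv_smul₀ hc, inv_smul_smul₀ hc]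

theorem velocityExcess_add_mul (h : F → F → ℝ) (V : F → ℝ) (ε : ℝ) :
    velocityExcess (fun x ξ => h x ξ + ε * V x) = velocityExcess h := by
  funext z
  simp only [velocityExcess, gradient_add_const]

theorem positionGradient_add_mul {V : F → ℝ} (hh : ∀ ξ, Differentiable ℝ (h · ξ))
    (hV : Differentiable ℝ V) (ε : ℝ) :
    positionGradient (fun x ξ => h x ξ + ε * V x) =
      fun z => positionGradient h z + ε • gradient V z.1 := by
  funext z
  simp only [positionGradient, gradient_add (hh z.2 z.1) ((hV z.1).const_mul ε),
    gradient_const_mul]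

theorem gradient_dollardPhase_neg (hh : ∀ x ξ, h x (-ξ) = h x ξ) (t : ℝ) (ξ : F) :
    gradient (dollardPhase h (-t)) (-ξ) = gradient (dollardPhase h t) ξ := by
  simpa [rescaledHamiltonian_neg_one hh, inv_neg] using
    gradient_dollardPhase_rescaledHamiltonian (by simp : (-1 : ℝ) ≠ 0) h t ξ

end Hamiltonians

namespace IsHamiltonSol

variable {d : ℕ} {h : E d → E d → ℝ} {y η : ℝ → E d}

theorem hasDerivAt_position (hy : IsHamiltonSol h y η) (s : ℝ) :
    HasDerivAt y (η s + velocityExcess h (y s, η s)) s := by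
  rw [velocityExcess, add_sub_cancel]
  exact (hy s).1

theorem hasDerivAt_momentum (hy : IsHamiltonSol h y η) (s : ℝ) :
    HasDerivAt η (-positionGradient h (y s, η s)) s :=
  (hy s).2

theorem rescale {c : ℝ} (hc : c ≠ 0) (hy : IsHamiltonSol h y η) :
    IsHamiltonSol (rescaledHamiltonian c h) (fun s => y (s / c)) (fun s => c⁻¹ • η (s / c)) := by
  intro s
  have htime : HasDerivAt (fun s => s / c) (1 / c) s := (hasDerivAt_id s).div_const c
  refine ⟨((hy (s / c)).1.scomp s htime).congr_deriv ?_,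
    (((hy (s / c)).2.scomp s htime).const_smul c⁻¹).congr_deriv ?_⟩
  · rw [gradient_rescaledHamiltonian hc, smul_inv_smul₀ hc, one_div]
  · simp only [rescaledHamiltonian, gradient_const_mul, smul_inv_smul₀ hc, smul_smul, smul_neg]
    congr 2
    field_simp

theorem reverse (hh : ∀ x ξ, h x (-ξ) = h x ξ) (hy : IsHamiltonSol h y η) :
    IsHamiltonSol h (fun s => y (-s)) (fun s => -η (-s)) := by
  simpa [rescaledHamiltonian_neg_one hh, div_neg, inv_neg] using
    hy.rescale (by simp : (-1 : ℝ) ≠ 0)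

end IsHamiltonSol

section LongRange

/-- `k + VL + VS` is a long range perturbation of the free Hamiltonian `|ξ|²/2`: the kinetic energy
`k` is quadratic in the momentum and tends to the free one at rate `‖x‖^(-μ)`, while the forces
`∇VL` and `∇VS` are of size `‖x‖^(1-μ)` and `‖x‖^(1-2μ)`. Only as many derivatives are controlled
as the asymptotics of the modified position requires. -/
structure IsLongRangeHamiltonian {F : Type*} [NormedAddCommGroup F] [InnerProductSpace ℝ F]
    [CompleteSpace F] (μ : ℝ) (k : F → F → ℝ) (VL VS : F → ℝ) : Prop where
  differentiable_kinetic : Differentiable ℝ k.uncurry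
  kinetic_smul : ∀ (c : ℝ) x ξ, k x (c • ξ) = c ^ 2 * k x ξ
  velocity : ∀ M, ∃ K,
    IsPhaseSymbolOn (Set.univ ×ˢ Metric.closedBall 0 M) K μ (velocityExcess k)
  force : ∀ M, ∃ K,
    IsPhaseSymbolOn (Set.univ ×ˢ Metric.closedBall 0 M) K (1 + μ) (positionGradient k)
  differentiable_longRange : Differentiable ℝ VL
  longRange : ∃ K, IsSymbolOn Set.univ K (μ - 1) (gradient VL)
  contDiff_shortRange : ContDiff ℝ 1 VS
  shortRange : ∃ K, 0 ≤ K ∧ ∀ x, ‖gradient VS x‖ ≤ K * (1 + ‖x‖) ^ (-(2 * μ - 1))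

namespace IsLongRangeHamiltonian

variable {F : Type*} [NormedAddCommGroup F] [InnerProductSpace ℝ F] [CompleteSpace F]
  {μ : ℝ} {k : F → F → ℝ} {VL VS : F → ℝ}

theorem mono {μ' : ℝ} (hk : IsLongRangeHamiltonian μ k VL VS) (hμ : μ' ≤ μ) :
    IsLongRangeHamiltonian μ' k VL VS where
  differentiable_kinetic := hk.differentiable_kinetic
  kinetic_smul := hk.kinetic_smul
  velocity M := (hk.velocity M).imp fun _ hK => hK.mono_order hμ
  force M := (hk.force M).imp fun _ hK => hK.mono_order (by gcongr)
  differentiable_longRange := hk.differentiable_longRange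
  longRange := hk.longRange.imp fun _ hK => hK.mono_order (by gcongr)
  contDiff_shortRange := hk.contDiff_shortRange
  shortRange := hk.shortRange.imp fun K ⟨hK, hVS⟩ => ⟨hK, fun x => (hVS x).trans <| by
    gcongr
    exact le_add_of_nonneg_right (norm_nonneg x)⟩

theorem contDiff_velocityExcess (hk : IsLongRangeHamiltonian μ k VL VS) :
    ContDiff ℝ 1 (velocityExcess k) :=
  (hk.velocity 0).choose_spec.contDiff

theorem contDiff_positionGradient (hk : IsLongRangeHamiltonian μ k VL VS) :
    ContDiff ℝ 1 (positionGradient k) :=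
  (hk.force 0).choose_spec.contDiff

theorem continuous_gradient_longRange (hk : IsLongRangeHamiltonian μ k VL VS) :
    Continuous (gradient VL) :=
  hk.longRange.choose_spec.contDiff.continuous

theorem continuous_gradient_shortRange (hk : IsLongRangeHamiltonian μ k VL VS) :
    Continuous (gradient VS) :=
  (InnerProductSpace.toDual ℝ F).symm.continuous.comp
    (hk.contDiff_shortRange.continuous_fderiv one_ne_zero)

theorem differentiable_kinetic_position (hk : IsLongRangeHamiltonian μ k VL VS) (ξ : F) :
    Differentiable ℝ (k · ξ) :=
  hk.differentiable_kinetic.comp (f := fun x => (x, ξ)) (by fun_prop)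

theorem kinetic_neg (hk : IsLongRangeHamiltonian μ k VL VS) (x ξ : F) : k x (-ξ) = k x ξ := by
  simpa using hk.kinetic_smul (-1) x ξ

theorem rescaledHamiltonian_kinetic_add (hk : IsLongRangeHamiltonian μ k VL VS) {c : ℝ}
    (hc : c ≠ 0) (V : F → ℝ) :
    rescaledHamiltonian c (fun x ξ => k x ξ + V x) = fun x ξ => k x ξ + (c ^ 2)⁻¹ * V x := by
  ext x ξ
  rw [rescaledHamiltonian, hk.kinetic_smul, mul_add, inv_mul_cancel_left₀ (pow_ne_zero 2 hc)]

theorem gradient_dollardPhase_kinetic [ProperSpace F] (hk : IsLongRangeHamiltonian μ k VL VS)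
    (t : ℝ) (ξ : F) :
    gradient (dollardPhase k t) ξ = dollardDrift (velocityExcess k) (positionGradient k) t ξ :=
  gradient_dollardPhase hk.differentiable_kinetic hk.contDiff_velocityExcess.continuous
    hk.contDiff_positionGradient.continuous t ξ

theorem gradient_dollardPhase_kinetic_add [ProperSpace F]
    (hk : IsLongRangeHamiltonian μ k VL VS) (ε t : ℝ) (ξ : F) :
    gradient (dollardPhase (fun x ξ => k x ξ + ε * VL x) t) ξ =
      dollardDrift (velocityExcess k) (fun z => positionGradient k z + ε • gradient VL z.1) t
        ξ := by
  have hforce := positionGradient_add_mul hk.differentiable_kinetic_position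
    hk.differentiable_longRange ε
  rw [gradient_dollardPhase, velocityExcess_add_mul, hforce]
  · exact hk.differentiable_kinetic.add
      ((hk.differentiable_longRange.comp differentiable_fst).const_mul ε)
  · rw [velocityExcess_add_mul]
    exact hk.contDiff_velocityExcess.continuous
  · rw [hforce]
    exact hk.contDiff_positionGradient.continuous.add
      ((hk.continuous_gradient_longRange.comp continuous_fst).const_smul ε)

theorem exists_isPhaseSymbolOn_force (hk : IsLongRangeHamiltonian μ k VL VS) (M B : ℝ) :
    ∃ K, ∀ {ε ρ : ℝ}, 0 ≤ ε → ε * (1 + ρ) ^ 2 ≤ B →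
      IsPhaseSymbolOn (Metric.closedBall 0 ρ ×ˢ Metric.closedBall 0 M) K (1 + μ)
        (fun z => positionGradient k z + ε • gradient VL z.1) := by
  obtain ⟨K, hK⟩ := hk.force M
  obtain ⟨N, hN⟩ := hk.longRange
  refine ⟨K + N * B, fun {ε ρ} hε hB => ?_⟩
  have hlong := (hN.const_smul_closedBall hε hB).comp_fst (Metric.closedBall 0 M)
  rw [show μ - 1 + 2 = 1 + μ by ring] at hlong
  exact (hK.mono (Set.prod_mono_left (Set.subset_univ _)) le_rfl).add hlong

end IsLongRangeHamiltonian

variable {d : ℕ} {μ κ : ℝ} {k : E d → E d → ℝ} {VL VS : E d → ℝ}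

theorem IsHamiltonSol.hasDerivAt_momentum_add {ε : ℝ} {Y H : ℝ → E d}
    (hk : IsLongRangeHamiltonian μ k VL VS)
    (hY : IsHamiltonSol (fun x ξ => k x ξ + ε * (VL x + VS x)) Y H) (s : ℝ) :
    HasDerivAt H (-(positionGradient k (Y s, H s) + ε • gradient VL (Y s) +
      ε • gradient VS (Y s))) s := by
  have hVL := hk.differentiable_longRange
  have hVS := hk.contDiff_shortRange.differentiable one_ne_zero
  refine (hY.hasDerivAt_momentum s).congr_deriv ?_
  simp only [positionGradient_add_mul hk.differentiable_kinetic_position (hVL.fun_add hVS)]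
  rw [gradient_add (hVL _) (hVS _), smul_add, add_assoc]

theorem IsLongRangeHamiltonian.exists_norm_position_le (hk : IsLongRangeHamiltonian μ k VL VS)
    (hμ : 0 ≤ μ) (M : ℝ) (x : E d) :
    ∃ N, |M| ≤ N ∧ ∀ {ε L : ℝ} {V : E d → ℝ} {Y H : ℝ → E d},
      IsHamiltonSol (fun x ξ => k x ξ + ε * V x) Y H → Y 0 = x →
      (∀ s ∈ Set.Icc 0 L, ‖H s‖ ≤ M) → ∀ s ∈ Set.Icc 0 L, ‖Y s‖ ≤ N * (1 + L) := by
  obtain ⟨K, hK⟩ := hk.velocity M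
  have hK0 := hK.nonneg
  refine ⟨‖x‖ + |M| + K, by linarith [norm_nonneg x], ?_⟩
  intro ε L V Y H hY hY0 hM s hs
  have hmem : ∀ s ∈ Set.Icc 0 L, (Y s, H s) ∈ Set.univ ×ˢ Metric.closedBall 0 M :=
    fun s hs => ⟨trivial, mem_closedBall_zero_iff.2 (hM s hs)⟩
  have hvelocity : ∀ s ∈ Set.Icc 0 L, HasDerivAt Y (H s + velocityExcess k (Y s, H s)) s :=
    fun s _ => by simpa only [velocityExcess_add_mul] using hY.hasDerivAt_position s
  calc ‖Y s‖ ≤ ‖x‖ + (M + K) * s := hY0 ▸ hK.norm_position_le hμ hvelocity hmem hM hs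
    _ ≤ ‖x‖ + (|M| + K) * L := by
        have := hs.1
        gcongr
        exacts [le_abs_self M, hs.2]
    _ ≤ (‖x‖ + |M| + K) * (1 + L) := by
        have := mul_nonneg (norm_nonneg x) (hs.1.trans hs.2)
        linarith [abs_nonneg M]

theorem IsLongRangeHamiltonian.exists_isEscapingMotion (hk : IsLongRangeHamiltonian μ k VL VS)
    (hμ : 1 / 2 < μ) (hμ1 : μ < 1) (hκ : 0 < κ) (hκ1 : κ ≤ 1) (M B : ℝ) (x : E d) :
    ∃ K, ∀ {ε L : ℝ} {Y H : ℝ → E d}, 0 ≤ ε → 0 ≤ L → ε * (1 + L) ^ 2 ≤ B →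
      IsHamiltonSol (fun x ξ => k x ξ + ε * (VL x + VS x)) Y H → Y 0 = x →
      (∀ s ∈ Set.Icc 0 L, κ * (1 + s) ≤ 1 + ‖Y s‖) → (∀ s ∈ Set.Icc 0 L, ‖H s‖ ≤ M) →
      ∃ U, IsEscapingMotion U μ K κ L (velocityExcess k)
        (fun z => positionGradient k z + ε • gradient VL z.1) (fun s => ε • gradient VS (Y s))
        Y H := by
  obtain ⟨Kv, hKv⟩ := hk.velocity M
  obtain ⟨Ks, hKs0, hKs⟩ := hk.shortRange
  obtain ⟨N, hMN, hN⟩ := hk.exists_norm_position_le (by linarith) M x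
  have hN0 := (abs_nonneg M).trans hMN
  obtain ⟨Kf, hKf⟩ := hk.exists_isPhaseSymbolOn_force M ((1 + N) ^ 2 * B)
  refine ⟨max (max Kv Kf) (Ks * ((1 + N) ^ 2 * B)), ?_⟩
  intro ε L Y H hε hL hB hY hY0 hescape hM
  have hposition := hN hY hY0 hM
  have hρ : 1 + N * (1 + L) ≤ (1 + N) * (1 + L) := by linarith
  have hB' : ε * (1 + N * (1 + L)) ^ 2 ≤ (1 + N) ^ 2 * B :=
    calc ε * (1 + N * (1 + L)) ^ 2 ≤ ε * ((1 + N) * (1 + L)) ^ 2 := by gcongr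
      _ = (1 + N) ^ 2 * (ε * (1 + L) ^ 2) := by ring
      _ ≤ (1 + N) ^ 2 * B := by gcongr
  refine ⟨Metric.closedBall 0 (N * (1 + L)) ×ˢ Metric.closedBall 0 M, hμ, hμ1, hκ, hκ1,
    (convex_closedBall _ _).prod (convex_closedBall _ _),
    hKv.mono (Set.prod_mono_left (Set.subset_univ _)) (by simp), (hKf hε hB').mono le_rfl (by simp),
    fun s _ => by simpa only [velocityExcess_add_mul] using hY.hasDerivAt_position s,
    fun s _ => hY.hasDerivAt_momentum_add hk s, fun s hs => ?_, hescape,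
    fun s hs => ⟨mem_closedBall_zero_iff.2 (hposition s hs), mem_closedBall_zero_iff.2 (hM s hs)⟩,
    fun s hs σ hσ => ⟨mem_closedBall_zero_iff.2 ?_, mem_closedBall_zero_iff.2 (hM s hs)⟩⟩
  · refine (norm_smul_le_mul_rpow_neg_add_two hKs0 hε (by positivity)
      (add_le_add_right (hposition s hs) 1) hB' (hKs (Y s))).trans ?_
    rw [show 2 * μ - 1 + 2 = 1 + 2 * μ by ring]
    gcongr
    exact le_max_right _ _
  · have := hσ.1
    rw [norm_smul, Real.norm_of_nonneg this, mul_comm]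
    gcongr
    exacts [((hM s hs).trans (le_abs_self M)).trans hMN, by linarith [hσ.2, hs.2]]

end LongRange

section HighEnergy

theorem exists_mul_one_add_le_one_add {c : ℝ} (hc : 0 < c) (C : ℝ) :
    ∃ κ, 0 < κ ∧ κ ≤ 1 ∧ ∀ r s, 0 ≤ r → 0 ≤ s → c * s - C ≤ r → κ * (1 + s) ≤ 1 + r := by
  have hD : 0 < 1 + |C| := by positivity
  refine ⟨min 1 c / (1 + |C|), by positivity, div_le_one_of_le₀ ?_ hD.le, fun r s hr hs h => ?_⟩
  · exact (min_le_left _ _).trans (le_add_of_nonneg_right (abs_nonneg C))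
  · rw [div_mul_eq_mul_div, div_le_iff₀ hD]
    calc min 1 c * (1 + s) ≤ 1 + c * s := by
          rw [mul_add, mul_one]
          exact add_le_add (min_le_left _ _) (by gcongr; exact min_le_right _ _)
      _ ≤ (1 + r) * (1 + |C|) := by nlinarith [le_abs_self C, abs_nonneg C]

theorem rescaled_bounds {G : Type*} [NormedAddCommGroup G] [NormedSpace ℝ G] {X Ξ : ℝ → G}
    {l t c C M : ℝ} (hl : 0 < l)
    (hbd : ∀ s, |s| ≤ t → c * l * |s| - C ≤ ‖X s‖ ∧ ‖Ξ s‖ ≤ M * l) {s : ℝ}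
    (hs : s ∈ Set.Icc 0 (l * t)) : c * s - C ≤ ‖X (s / l)‖ ∧ ‖l⁻¹ • Ξ (s / l)‖ ≤ M := by
  have hsl : |s / l| = s / l := abs_of_nonneg (div_nonneg hs.1 hl.le)
  obtain ⟨hposition, hmomentum⟩ := hbd (s / l) (by rw [hsl, div_le_iff₀' hl]; exact hs.2)
  constructor
  · rwa [hsl, mul_assoc, mul_div_cancel₀ _ hl.ne'] at hposition
  · rwa [norm_smul, norm_inv, Real.norm_of_nonneg hl.le, inv_mul_le_iff₀ hl, mul_comm l]

variable {d : ℕ} {μ t c C M : ℝ} {k : E d → E d → ℝ} {VL VS : E d → ℝ} {y η : ℝ → E d}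
  {X Ξ : ℝ → ℝ → E d} {x : E d}

namespace IsLongRangeHamiltonian

theorem exists_eventually_isEscapingMotion (hk : IsLongRangeHamiltonian μ k VL VS)
    (hμ : 1 / 2 < μ) (hμ1 : μ < 1) (ht : 0 ≤ t) (hc : 0 < c)
    (hX : ∀ᶠ l in atTop,
      IsHamiltonSol (fun x ξ => k x ξ + (VL x + VS x)) (X l) (Ξ l) ∧ X l 0 = x)
    (hbd : ∀ᶠ l in atTop, ∀ s, |s| ≤ t → c * l * |s| - C ≤ ‖X l s‖ ∧ ‖Ξ l s‖ ≤ M * l) :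
    ∃ K κ, 0 < κ ∧ ∀ᶠ l in atTop, ∃ U, IsEscapingMotion U μ K κ (l * t) (velocityExcess k)
      (fun z => positionGradient k z + (l ^ 2)⁻¹ • gradient VL z.1)
      (fun s => (l ^ 2)⁻¹ • gradient VS (X l (s / l)))
      (fun s => X l (s / l)) (fun s => l⁻¹ • Ξ l (s / l)) := by
  obtain ⟨κ, hκ, hκ1, hescape⟩ := exists_mul_one_add_le_one_add hc C
  obtain ⟨K, hmotion⟩ := hk.exists_isEscapingMotion hμ hμ1 hκ hκ1 M ((1 + t) ^ 2) x
  refine ⟨K, κ, hκ, ?_⟩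
  filter_upwards [hX, hbd, eventually_ge_atTop 1] with l hX hbd hl
  have hl0 : 0 < l := by linarith
  have henergy : (l ^ 2)⁻¹ * (1 + l * t) ^ 2 ≤ (1 + t) ^ 2 := by
    rw [inv_mul_le_iff₀ (by positivity), ← mul_pow]
    gcongr
    linarith
  refine hmotion (by positivity) (by positivity) henergy
    (hk.rescaledHamiltonian_kinetic_add hl0.ne' (fun x => VL x + VS x) ▸ hX.1.rescale hl0.ne')
    (by simpa using hX.2) (fun s hs => ?_) (fun s hs => (rescaled_bounds hl0 hbd hs).2)
  exact hescape _ s (norm_nonneg _) hs.1 (rescaled_bounds hl0 hbd hs).1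

theorem gradient_dollardPhase_eq_dollardDrift_rescaled (hk : IsLongRangeHamiltonian μ k VL VS)
    {l : ℝ} (hl : l ≠ 0) (ξ : E d) :
    gradient (dollardPhase (fun x ξ => k x ξ + VL x) t) ξ =
      dollardDrift (velocityExcess k)
        (fun z => positionGradient k z + (l ^ 2)⁻¹ • gradient VL z.1) (l * t) (l⁻¹ • ξ) := by
  rw [← gradient_dollardPhase_rescaledHamiltonian hl, hk.rescaledHamiltonian_kinetic_add hl,
    hk.gradient_dollardPhase_kinetic_add]

theorem tendsto_sub_gradient_dollardPhase_of_pos (hk : IsLongRangeHamiltonian μ k VL VS)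
    (hμ : 1 / 2 < μ) (hμ1 : μ < 1) (ht : 0 < t) (hy : IsHamiltonSol k y η)
    (hx : Tendsto (fun s => y s - gradient (dollardPhase k s) (η s)) atTop (𝓝 x))
    (hX : ∀ᶠ l in atTop, IsHamiltonSol (fun x ξ => k x ξ + (VL x + VS x)) (X l) (Ξ l) ∧
      X l 0 = y 0 ∧ Ξ l 0 = l • η 0) (hc : 0 < c)
    (hbd : ∀ᶠ l in atTop, ∀ s, |s| ≤ t → c * l * |s| - C ≤ ‖X l s‖ ∧ ‖Ξ l s‖ ≤ M * l) :
    Tendsto (fun l => X l t - gradient (dollardPhase (fun x ξ => k x ξ + VL x) t) (Ξ l t))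
      atTop (𝓝 x) := by
  obtain ⟨K, κ, hκ, hmotion⟩ := hk.exists_eventually_isEscapingMotion hμ hμ1 ht.le hc
    (hX.mono fun l hl => ⟨hl.1, hl.2.1⟩) hbd
  simp only [hk.gradient_dollardPhase_kinetic] at hx
  refine (tendsto_sub_dollardDrift (S := fun z => gradient VS z.1) (M := M)
    (ε := fun l : ℝ => (l ^ 2)⁻¹) (L := fun l => l * t) (τ := fun l => l * t)
    (y := fun l s => X l (s / l)) (η := fun l s => l⁻¹ • Ξ l (s / l)) hκ hμ
    hk.contDiff_velocityExcess hk.contDiff_positionGradient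
    (hk.continuous_gradient_longRange.comp continuous_fst)
    (hk.continuous_gradient_shortRange.comp continuous_fst)
    (fun s _ => hy.hasDerivAt_position s) (fun s _ => hy.hasDerivAt_momentum s) hmotion ?_ ?_ ?_ ?_
    (tendsto_id.atTop_mul_const ht) (Eventually.of_forall fun l => le_rfl) hx).congr' ?_
  · filter_upwards [hX] with l hl
    simpa using hl.2.1
  · filter_upwards [hX, eventually_gt_atTop 0] with l hl hl0
    simp [hl.2.2, hl0.ne']
  · filter_upwards [hbd, eventually_gt_atTop 0] with l hl hl0 s hs
    exact (rescaled_bounds hl0 hl hs).2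
  · exact tendsto_inv_atTop_zero.comp (tendsto_pow_atTop two_ne_zero)
  · filter_upwards [eventually_gt_atTop 0] with l hl0
    simp only [Function.comp_def]
    rw [hk.gradient_dollardPhase_eq_dollardDrift_rescaled hl0.ne', mul_div_cancel_left₀ _ hl0.ne']

theorem tendsto_sub_gradient_dollardPhase_of_neg (hk : IsLongRangeHamiltonian μ k VL VS)
    (hμ : 1 / 2 < μ) (hμ1 : μ < 1) (ht : t < 0) (hy : IsHamiltonSol k y η)
    (hx : Tendsto (fun s => y s - gradient (dollardPhase k s) (η s)) atBot (𝓝 x))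
    (hX : ∀ᶠ l in atTop, IsHamiltonSol (fun x ξ => k x ξ + (VL x + VS x)) (X l) (Ξ l) ∧
      X l 0 = y 0 ∧ Ξ l 0 = l • η 0) (hc : 0 < c)
    (hbd : ∀ᶠ l in atTop, ∀ s, |s| ≤ -t → c * l * |s| - C ≤ ‖X l s‖ ∧ ‖Ξ l s‖ ≤ M * l) :
    Tendsto (fun l => X l t - gradient (dollardPhase (fun x ξ => k x ξ + VL x) t) (Ξ l t))
      atTop (𝓝 x) := by
  have hx' := hx.comp tendsto_neg_atTop_atBot
  have heven : ∀ (V : E d → ℝ) x ξ, k x (-ξ) + V x = k x ξ + V x := fun V x ξ => by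
    rw [hk.kinetic_neg]
  have := hk.tendsto_sub_gradient_dollardPhase_of_pos (t := -t) (X := fun l s => X l (-s))
    (Ξ := fun l s => -Ξ l (-s)) (C := C) (M := M) hμ hμ1 (neg_pos.2 ht)
    (hy.reverse hk.kinetic_neg) (x := x) ?_ ?_ hc ?_
  · simpa only [neg_neg, gradient_dollardPhase_neg (h := fun x ξ => k x ξ + VL x) (heven VL)]
      using this
  · refine hx'.congr fun s => ?_
    simpa using (gradient_dollardPhase_neg hk.kinetic_neg (-s) (η (-s))).symm
  · filter_upwards [hX] with l hl
    exact ⟨hl.1.reverse (heven _), by simpa using hl.2⟩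
  · filter_upwards [hbd] with l hl s hs
    simpa using hl (-s) (by simpa using hs)

end IsLongRangeHamiltonian

end HighEnergy

section Separable

variable {F : Type*} [NormedAddCommGroup F] [InnerProductSpace ℝ F]

/-- The Hamiltonian `|ξ|²/2 + ∑ᵢ qᵢ(ξ) bᵢ(x)`, a perturbation of the free one by products of
functions of the position and of the momentum. -/
def separableHamiltonian {ι : Type*} [Fintype ι] (q b : ι → F → ℝ) (x ξ : F) : ℝ :=
  1 / 2 * ‖ξ‖ ^ 2 + ∑ i, q i ξ * b i x

variable [CompleteSpace F] {ι : Type*} [Fintype ι] {q b : ι → F → ℝ}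

theorem contDiff_gradient {f : F → ℝ} (hf : ContDiff ℝ 2 f) : ContDiff ℝ 1 (gradient f) :=
  (InnerProductSpace.toDual ℝ F).symm.toContinuousLinearEquiv.contDiff.comp
    (hf.fderiv_right (m := 1) (by norm_num [one_add_one_eq_two]))

theorem norm_gradient_eq_norm_fderiv (f : F → ℝ) (x : F) : ‖gradient f x‖ = ‖fderiv ℝ f x‖ :=
  (InnerProductSpace.toDual ℝ F).symm.norm_map _

theorem norm_fderiv_gradient (f : F → ℝ) (x : F) :
    ‖fderiv ℝ (gradient f) x‖ = ‖fderiv ℝ (fderiv ℝ f) x‖ := by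
  have hcomp : fderiv ℝ (gradient f) x = _ :=
    (InnerProductSpace.toDual ℝ F).symm.comp_fderiv (f := fderiv ℝ f) (x := x)
  rw [hcomp]
  exact (InnerProductSpace.toDual ℝ F).symm.toLinearIsometry.norm_toContinuousLinearMap_comp

theorem gradient_half_norm_sq (ξ : F) : gradient (fun ξ => 1 / 2 * ‖ξ‖ ^ 2) ξ = ξ := by
  rw [gradient_const_mul]
  refine ext_inner_right ℝ fun v => ?_
  rw [inner_smul_left, inner_gradient_left, fderiv_norm_sq_apply]
  simp

theorem gradient_sum_mul_const {f : ι → F → ℝ} {x : F} (hf : ∀ i, DifferentiableAt ℝ (f i) x)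
    (c : ι → ℝ) :
    gradient (fun x => ∑ i, f i x * c i) x = ∑ i, c i • gradient (f i) x := by
  have hderiv : HasFDerivAt (fun x => ∑ i, f i x * c i) (∑ i, c i • fderiv ℝ (f i) x) x :=
    HasFDerivAt.fun_sum fun i _ => (hf i).hasFDerivAt.mul_const (c i)
  simp [gradient, hderiv.fderiv]

theorem velocityExcess_separableHamiltonian (hq : ∀ i, Differentiable ℝ (q i)) :
    velocityExcess (separableHamiltonian q b) =
      fun z => ∑ i, b i z.1 • gradient (q i) z.2 := by
  funext z
  have hnorm : DifferentiableAt ℝ (fun ξ : F => 1 / 2 * ‖ξ‖ ^ 2) z.2 :=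
    (differentiable_id.norm_sq ℝ).const_mul (1 / 2) z.2
  have hsum : DifferentiableAt ℝ (fun ξ => ∑ i, q i ξ * b i z.1) z.2 := by fun_prop
  rw [velocityExcess, show separableHamiltonian q b z.1 = _ from rfl]
  unfold separableHamiltonian
  rw [gradient_add hnorm hsum, gradient_half_norm_sq,
    gradient_sum_mul_const (fun i => hq i z.2), add_sub_cancel_left]

theorem positionGradient_separableHamiltonian (hb : ∀ i, Differentiable ℝ (b i)) :
    positionGradient (separableHamiltonian q b) =
      fun z => ∑ i, q i z.2 • gradient (b i) z.1 := by
  funext z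
  have hsplit : (separableHamiltonian q b · z.2) =
      fun x => ∑ i, b i x * q i z.2 + 1 / 2 * ‖z.2‖ ^ 2 := by
    funext x
    simp only [separableHamiltonian, add_comm, mul_comm]
  rw [positionGradient, hsplit, gradient_add_const,
    gradient_sum_mul_const fun i => hb i z.1]

variable [ProperSpace F] {A : Set F} {e : ℝ}

theorem exists_isPhaseSymbolOn_velocityExcess_separableHamiltonian
    (hq : ∀ i, ContDiff ℝ 2 (q i)) (hb : ∀ i, ∃ K, IsSymbolOn A K e (b i)) (M : ℝ) :
    ∃ N, IsPhaseSymbolOn (A ×ˢ Metric.closedBall 0 M) N e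
      (velocityExcess (separableHamiltonian q b)) := by
  choose K hK using hb
  choose N hN using fun i => (hK i).exists_isPhaseSymbolOn_bilin
    (ContinuousLinearMap.lsmul ℝ ℝ).flip (contDiff_gradient (hq i)) M
  rw [velocityExcess_separableHamiltonian fun i => (hq i).differentiable two_ne_zero]
  exact ⟨_, isPhaseSymbolOn_sum fun i _ => hN i⟩

theorem exists_isPhaseSymbolOn_positionGradient_separableHamiltonian
    (hq : ∀ i, ContDiff ℝ 1 (q i)) (hb : ∀ i, Differentiable ℝ (b i))
    (hb' : ∀ i, ∃ K, IsSymbolOn A K e (gradient (b i))) (M : ℝ) :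
    ∃ N, IsPhaseSymbolOn (A ×ˢ Metric.closedBall 0 M) N e
      (positionGradient (separableHamiltonian q b)) := by
  choose K hK using hb'
  choose N hN using fun i => (hK i).exists_isPhaseSymbolOn_bilin
    (ContinuousLinearMap.lsmul ℝ ℝ) (hq i) M
  rw [positionGradient_separableHamiltonian hb]
  exact ⟨_, isPhaseSymbolOn_sum fun i _ => hN i⟩

end Separable

section Coefficients

variable {d : ℕ}

theorem half_one_add_norm_le_jap (x : E d) : (1 + ‖x‖) / 2 ≤ jap x := by
  have hsqrt : √2 ≤ 2 := Real.sqrt_le_iff.2 (by norm_num)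
  rw [div_le_iff₀' two_pos]
  exact (one_add_norm_le_sqrt_two_mul_sqrt x).trans (by rw [jap]; gcongr)

theorem jap_rpow_neg_le (x : E d) (e : ℝ) : jap x ^ (-e) ≤ 2 ^ |e| * (1 + ‖x‖) ^ (-e) := by
  have hx : 0 < 1 + ‖x‖ := by positivity
  have hlower := half_one_add_norm_le_jap x
  rcases le_total 0 e with he | he
  · rw [abs_of_nonneg he]
    calc jap x ^ (-e) ≤ ((1 + ‖x‖) / 2) ^ (-e) :=
          Real.rpow_le_rpow_of_nonpos (by positivity) hlower (neg_nonpos.2 he)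
      _ = 2 ^ e * (1 + ‖x‖) ^ (-e) := by
          rw [Real.div_rpow hx.le zero_le_two, Real.rpow_neg zero_le_two, div_inv_eq_mul, mul_comm]
  · have hupper : jap x ≤ 1 + ‖x‖ := sqrt_one_add_norm_sq_le x
    exact (Real.rpow_le_rpow (Real.sqrt_nonneg _) hupper (neg_nonneg.2 he)).trans
      (le_mul_of_one_le_left (by positivity) (Real.one_le_rpow one_le_two (abs_nonneg e)))

theorem exists_isSymbolOn_of_jap {G : Type*} [NormedAddCommGroup G] [NormedSpace ℝ G]
    {h : E d → G} {e C₀ C₁ : ℝ} (hh : ContDiff ℝ 1 h) (hC₀ : ∀ x, ‖h x‖ ≤ C₀ * jap x ^ (-e))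
    (hC₁ : ∀ x, ‖fderiv ℝ h x‖ ≤ C₁ * jap x ^ (-(1 + e))) :
    ∃ K, IsSymbolOn Set.univ K e h := by
  have hbound : ∀ {u C e : ℝ} {x : E d}, u ≤ C * jap x ^ (-e) →
      u ≤ |C| * 2 ^ |e| * (1 + ‖x‖) ^ (-e) := fun {u C e x} hu => by
    have hjap : 0 ≤ jap x ^ (-e) := Real.rpow_nonneg (Real.sqrt_nonneg _) _
    calc u ≤ |C| * jap x ^ (-e) := hu.trans (by gcongr; exact le_abs_self C)
      _ ≤ |C| * (2 ^ |e| * (1 + ‖x‖) ^ (-e)) := by gcongr; exact jap_rpow_neg_le x e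
      _ = |C| * 2 ^ |e| * (1 + ‖x‖) ^ (-e) := by ring
  refine ⟨max (|C₀| * 2 ^ |e|) (|C₁| * 2 ^ |1 + e|), by positivity, hh, fun x _ => ?_,
    fun x _ => ?_⟩
  · exact (hbound (hC₀ x)).trans (by gcongr; exact le_max_left _ _)
  · exact (hbound (hC₁ x)).trans (by gcongr; exact le_max_right _ _)

theorem exists_isSymbolOn_of_iteratedFDeriv {f : E d → ℝ} {m : ℝ} (hf : ContDiff ℝ 1 f)
    (hbound : ∀ j : ℕ, ∃ C > 0, ∀ x, ‖iteratedFDeriv ℝ j f x‖ ≤ C * jap x ^ (m - j)) :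
    ∃ K, IsSymbolOn Set.univ K (-m) f := by
  obtain ⟨C₀, -, hC₀⟩ := hbound 0
  obtain ⟨C₁, -, hC₁⟩ := hbound 1
  refine exists_isSymbolOn_of_jap (C₀ := C₀) (C₁ := C₁) hf (fun x => ?_) fun x => ?_
  · simpa using hC₀ x
  · rw [← norm_iteratedFDeriv_one, show -(1 + -m) = m - (1 : ℕ) by push_cast; ring]
    exact hC₁ x

theorem exists_isSymbolOn_gradient_of_iteratedFDeriv {f : E d → ℝ} {m : ℝ} (hf : ContDiff ℝ 2 f)
    (hbound : ∀ j : ℕ, ∃ C > 0, ∀ x, ‖iteratedFDeriv ℝ j f x‖ ≤ C * jap x ^ (m - j)) :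
    ∃ K, IsSymbolOn Set.univ K (1 - m) (gradient f) := by
  obtain ⟨C₁, -, hC₁⟩ := hbound 1
  obtain ⟨C₂, -, hC₂⟩ := hbound 2
  refine exists_isSymbolOn_of_jap (C₀ := C₁) (C₁ := C₂) (contDiff_gradient hf) (fun x => ?_)
    fun x => ?_
  · rw [norm_gradient_eq_norm_fderiv, ← norm_iteratedFDeriv_one,
      show -(1 - m) = m - (1 : ℕ) by push_cast; ring]
    exact hC₁ x
  · rw [norm_fderiv_gradient, ← norm_iteratedFDeriv_one, norm_iteratedFDeriv_fderiv,
      show -(1 + (1 - m)) = m - (1 + 1 : ℕ) by push_cast; ring]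
    exact hC₂ x

/-- The deviation `a_{mn} - δ_{mn}` of the metric from the flat one, indexed by the pairs
`(m, n)`. -/
def metricDeviation (a : Fin d → Fin d → E d → ℝ) (i : Fin d × Fin d) (x : E d) : ℝ :=
  a i.1 i.2 x - if i.1 = i.2 then 1 else 0

variable {μ ν : ℝ} {a : Fin d → Fin d → E d → ℝ} {VL VS : E d → ℝ}

theorem kk_eq_separableHamiltonian (a : Fin d → Fin d → E d → ℝ) :
    kk a = separableHamiltonian (fun i ξ => 1 / 2 * (ξ i.1 * ξ i.2)) (metricDeviation a) := by
  ext x ξ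
  have hdiag : ‖ξ‖ ^ 2 = ∑ m, ∑ n, if m = n then ξ m * ξ n else 0 := by
    simp [EuclideanSpace.real_norm_sq_eq, ← sq]
  rw [kk, separableHamiltonian, hdiag, Fintype.sum_prod_type]
  simp only [Finset.mul_sum, ← Finset.sum_add_distrib, metricDeviation]
  refine Finset.sum_congr rfl fun m _ => Finset.sum_congr rfl fun n _ => ?_
  split_ifs <;> ring

theorem kk_smul (c : ℝ) (x ξ : E d) : kk a x (c • ξ) = c ^ 2 * kk a x ξ := by
  simp only [kk, Finset.mul_sum, PiLp.smul_apply, smul_eq_mul]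
  refine Finset.sum_congr rfl fun m _ => Finset.sum_congr rfl fun n _ => ?_
  ring

theorem differentiable_kk (ha : ∀ m n, Differentiable ℝ (a m n)) :
    Differentiable ℝ (kk a).uncurry := by
  simp only [Function.uncurry_def, kk]
  fun_prop

theorem AssumptionC.isLongRangeHamiltonian (h : AssumptionC μ ν a VL VS) :
    IsLongRangeHamiltonian (min μ (ν / 2)) (kk a) VL VS := by
  obtain ⟨ha, -, -, hdecay, hVL, hVS, hVLdecay, hVSdecay⟩ := h
  have hsmooth : (2 : WithTop ℕ∞) ≤ (⊤ : ℕ∞) := WithTop.coe_le_coe.2 le_top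
  have hdev : ∀ i, ContDiff ℝ 2 (metricDeviation a i) := fun i =>
    ((ha i.1 i.2).of_le hsmooth).sub contDiff_const
  have hmomentum : ∀ i : Fin d × Fin d, ContDiff ℝ 2 fun ξ : E d => 1 / 2 * (ξ i.1 * ξ i.2) := by
    fun_prop
  have hmetric : ∀ i, ∃ K, IsSymbolOn Set.univ K (min μ (ν / 2)) (metricDeviation a i) := fun i =>
    (exists_isSymbolOn_of_iteratedFDeriv ((hdev i).of_le one_le_two) (hdecay i.1 i.2)).imp
      fun _ hK => hK.mono_order (by simp)
  have hmetric' : ∀ i, ∃ K,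
      IsSymbolOn Set.univ K (1 + min μ (ν / 2)) (gradient (metricDeviation a i)) := fun i =>
    (exists_isSymbolOn_gradient_of_iteratedFDeriv (hdev i) (hdecay i.1 i.2)).imp
      fun _ hK => hK.mono_order (by simp)
  obtain ⟨K, hK⟩ := exists_isSymbolOn_gradient_of_iteratedFDeriv (hVS.of_le hsmooth) hVSdecay
  have hlong := exists_isSymbolOn_gradient_of_iteratedFDeriv (hVL.of_le hsmooth) hVLdecay
  constructor
  case differentiable_kinetic =>
    exact differentiable_kk fun m n => (ha m n).differentiable (by simp)
  case kinetic_smul => exact kk_smul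
  case velocity =>
    rw [kk_eq_separableHamiltonian]
    exact exists_isPhaseSymbolOn_velocityExcess_separableHamiltonian hmomentum hmetric
  case force =>
    rw [kk_eq_separableHamiltonian]
    exact exists_isPhaseSymbolOn_positionGradient_separableHamiltonian
      (fun i => (hmomentum i).of_le one_le_two) (fun i => (hdev i).differentiable two_ne_zero)
      hmetric'
  case differentiable_longRange => exact hVL.differentiable (by simp)
  case longRange =>
    exact hlong.imp fun _ hN => hN.mono_order (by linarith [min_le_left μ (ν / 2)])
  case contDiff_shortRange => exact hVS.of_le (by simp)
  case shortRange =>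
    exact ⟨K, hK.nonneg, fun x =>
      (hK.mono_order (by linarith [min_le_right μ (ν / 2)])).norm_le x trivial⟩

end Coefficients

theorem stmt10_general {d : ℕ} {μ : ℝ} {k : E d → E d → ℝ} {VL VS : E d → ℝ}
    (hk : IsLongRangeHamiltonian μ k VL VS) (hμ : 1 / 2 < μ) {T : ℝ} {y η : ℝ → E d}
    (hy : IsHamiltonSol k y η) {xp xm : E d}
    (hxp : Tendsto (fun s => y s - gradient (dollardPhase k s) (η s)) atTop (𝓝 xp))
    (hxm : Tendsto (fun s => y s - gradient (dollardPhase k s) (η s)) atBot (𝓝 xm))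
    {X Ξ : ℝ → ℝ → E d}
    (hX : ∀ᶠ l in atTop, IsHamiltonSol (fun x ξ => k x ξ + (VL x + VS x)) (X l) (Ξ l) ∧
      X l 0 = y 0 ∧ Ξ l 0 = l • η 0)
    {c C M : ℝ} (hc : 0 < c)
    (hbd : ∀ᶠ l in atTop, ∀ s, |s| ≤ T → c * l * |s| - C ≤ ‖X l s‖ ∧ ‖Ξ l s‖ ≤ M * l) :
    (∀ t, 0 < t → t ≤ T →
      Tendsto (fun l => X l t - gradient (dollardPhase (fun x ξ => k x ξ + VL x) t) (Ξ l t))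
        atTop (𝓝 xp)) ∧
    (∀ t, -T ≤ t → t < 0 →
      Tendsto (fun l => X l t - gradient (dollardPhase (fun x ξ => k x ξ + VL x) t) (Ξ l t))
        atTop (𝓝 xm)) := by
  have hk' := hk.mono (min_le_left μ (3 / 4))
  have hmin : 1 / 2 < min μ (3 / 4) := lt_min hμ (by norm_num)
  have hmin1 : min μ (3 / 4) < 1 := (min_le_right _ _).trans_lt (by norm_num)
  refine ⟨fun t ht htT => ?_, fun t htT ht => ?_⟩
  · exact hk'.tendsto_sub_gradient_dollardPhase_of_pos hmin hmin1 ht hy hxp hX hc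
      (hbd.mono fun l hl s hs => hl s (hs.trans htT))
  · exact hk'.tendsto_sub_gradient_dollardPhase_of_neg hmin hmin1 ht hy hxm hX hc
      (hbd.mono fun l hl s hs => hl s (hs.trans (neg_le.1 htT)))

/-- Theorem 6, high-energy asymptotics of the modified position. -/
theorem stmt10 (d : ℕ) (hd : 1 ≤ d) (μ ν : ℝ) (hμ : 1 / 2 < μ) (hμ1 : μ ≤ 1) (hν : 1 < ν)
    (a : Fin d → Fin d → E d → ℝ) (VL VS : E d → ℝ) (hAC : AssumptionC μ ν a VL VS)
    (T : ℝ) (hT : 0 < T) (x0 ξ0 : E d) (hξ0 : ξ0 ≠ 0)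
    (y η : ℝ → E d) (hyHam : IsHamiltonSol (kk a) y η) (hy0 : y 0 = x0) (hη0 : η 0 = ξ0)
    (c C : ℝ) (hc : 0 < c) (hC : 0 < C) (hnt : ∀ s : ℝ, c * |s| - C ≤ ‖y s‖)
    (xp xm : E d)
    (hxp : Tendsto (fun s => y s - gradient (Psi a s) (η s)) atTop (𝓝 xp))
    (hxm : Tendsto (fun s => y s - gradient (Psi a s) (η s)) atBot (𝓝 xm))
    (X Ξ : ℝ → ℝ → E d)
    (hXHam : ∀ l : ℝ, 1 ≤ l →
      IsHamiltonSol (fun z ζ => kk a z ζ + (VL z + VS z)) (X l) (Ξ l) ∧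
        X l 0 = x0 ∧ Ξ l 0 = l • ξ0)
    (lam0 c' C' M : ℝ) (hlam0 : 1 ≤ lam0) (hc' : 0 < c') (hC' : 0 < C') (hM : 0 < M)
    (hbd : ∀ l : ℝ, lam0 ≤ l → ∀ s : ℝ, |s| ≤ T →
      c' * l * |s| - C' ≤ ‖X l s‖ ∧ ‖Ξ l s‖ ≤ M * l) :
    (∀ t : ℝ, 0 < t → t ≤ T →
      Tendsto (fun l : ℝ => X l t - gradient (Phi a VL t) (Ξ l t)) atTop (𝓝 xp)) ∧
    (∀ t : ℝ, -T ≤ t → t < 0 →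
      Tendsto (fun l : ℝ => X l t - gradient (Phi a VL t) (Ξ l t)) atTop (𝓝 xm)) := by
  subst hy0 hη0
  exact stmt10_general hAC.isLongRangeHamiltonian (lt_min hμ (by linarith)) hyHam hxp hxm
    ((eventually_ge_atTop 1).mono hXHam) hc' ((eventually_ge_atTop lam0).mono hbd)
end
end

section
/- (Lemma 8, the modified trajectory solves the Hamilton equations for the effective Hamiltonian ℓ) Assume Assumption C. Define ℓ(t;z,ξ) = p( z + ∇_ξΦ(t,ξ), ξ ) − p^{(L)}(tξ, ξ). Let (x,ξ) : ℝ → ℝ^d × ℝ^d solve the Hamilton equations for p with x(0) = x₀, ξ(0) = ξ₀, and set z(t) = x(t) − ∇_ξΦ(t, ξ(t)). Then z'(t) = (∂ℓ/∂ξ)(t; z(t), ξ(t)) and ξ'(t) = −(∂ℓ/∂z)(t; z(t), ξ(t)) for all t ∈ ℝ, with z(0) = x₀ and ξ(0) = ξ₀. -/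
open Filter MeasureTheory
open scoped Topology BigOperators

noncomputable section

/-- `p(x,ξ) = k(x,ξ) + V(x)` with `V = V^{(L)} + V^{(S)}`. -/
def pp {d : ℕ} (a : Fin d → Fin d → E d → ℝ) (VL VS : E d → ℝ) (x ξ : E d) : ℝ :=
  kk a x ξ + (VL x + VS x)

/-- `p^{(L)}(x,ξ) = k(x,ξ) + V^{(L)}(x)`. -/
def pLr {d : ℕ} (a : Fin d → Fin d → E d → ℝ) (VL : E d → ℝ) (x ξ : E d) : ℝ :=
  kk a x ξ + VL x

/-- The effective Hamiltonian `ℓ(t;z,ξ) = p(z + ∇_ξΦ(t,ξ), ξ) − p^{(L)}(tξ, ξ)`. -/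
def ell {d : ℕ} (a : Fin d → Fin d → E d → ℝ) (VL VS : E d → ℝ) (t : ℝ) (z ξ : E d) : ℝ :=
  pp a VL VS (z + gradient (Phi a VL t) ξ) ξ - pLr a VL (t • ξ) ξ

/-!
The map `(x, ξ) ↦ (x − ∇_ξΦ(t,ξ), ξ)` is the canonical transformation generated by
`⟨z, ξ⟩ + Φ(t,ξ)`, so it turns the Hamiltonian `P` into `P(z + ∇_ξΦ, ξ) − ∂_tΦ`. Concretely, along
a trajectory of `P`, `z' = ∇_ξP − ∂_t∇_ξΦ + (∇²_ξΦ) ∇_xP`; since `∂_t∇_ξΦ = ∇_ξ∂_tΦ` and the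
Hessian is self-adjoint, this is the `ξ`-gradient of the new Hamiltonian. For the Dollard phase,
`∂_tΦ(t,ξ) = p^{(L)}(tξ,ξ)`. Joint smoothness of `Φ` comes from differentiation under the integral
sign.
-/

open Function
open scoped Gradient InnerProductSpace

universe u

section PartialDerivatives

variable {X Y G : Type*} [NormedAddCommGroup X] [NormedSpace ℝ X] [NormedAddCommGroup Y]
  [NormedSpace ℝ Y] [NormedAddCommGroup G] [NormedSpace ℝ G]

theorem hasFDerivAt_uncurry_left {f : X → Y → G} {x : X} {y : Y}
    (hf : DifferentiableAt ℝ (uncurry f) (x, y)) :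
    HasFDerivAt (f · y) ((fderiv ℝ (uncurry f) (x, y)).comp (.inl ℝ X Y)) x :=
  HasFDerivAt.comp (g := uncurry f) (f := fun x => (x, y)) x hf.hasFDerivAt
    (hasFDerivAt_prodMk_left x y)

theorem hasFDerivAt_uncurry_right {f : X → Y → G} {x : X} {y : Y}
    (hf : DifferentiableAt ℝ (uncurry f) (x, y)) :
    HasFDerivAt (f x) ((fderiv ℝ (uncurry f) (x, y)).comp (.inr ℝ X Y)) y :=
  HasFDerivAt.comp (g := uncurry f) y hf.hasFDerivAt (hasFDerivAt_prodMk_right x y)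

theorem fderiv_uncurry_eq_coprod {f : X → Y → G} {x : X} {y : Y}
    (hf : DifferentiableAt ℝ (uncurry f) (x, y)) :
    fderiv ℝ (uncurry f) (x, y) = (fderiv ℝ (f · y) x).coprod (fderiv ℝ (f x) y) := by
  rw [(hasFDerivAt_uncurry_left hf).fderiv, (hasFDerivAt_uncurry_right hf).fderiv]
  ext <;> simp

theorem contDiff_uncurry_fderiv_left {m n : WithTop ℕ∞} {f : X → Y → G}
    (hf : ContDiff ℝ n (uncurry f)) (hmn : m + 1 ≤ n) :
    ContDiff ℝ m (uncurry fun x y => fderiv ℝ (f · y) x) :=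
  ContDiff.fderiv (f := fun (w : X × Y) x => f x w.2) (g := Prod.fst)
    (hf.comp (f := fun w : (X × Y) × X => (w.2, w.1.2)) (by fun_prop)) contDiff_fst hmn

theorem contDiff_uncurry_fderiv_right {m n : WithTop ℕ∞} {f : X → Y → G}
    (hf : ContDiff ℝ n (uncurry f)) (hmn : m + 1 ≤ n) :
    ContDiff ℝ m (uncurry fun x => fderiv ℝ (f x)) :=
  ContDiff.fderiv (f := fun w : X × Y => f w.1) (g := Prod.snd)
    (hf.comp (f := fun w : (X × Y) × Y => (w.1.1, w.2)) (by fun_prop)) contDiff_snd hmn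

theorem deriv_eq_fderiv_uncurry_apply {f : ℝ → Y → G} {t : ℝ} {y : Y}
    (hf : DifferentiableAt ℝ (uncurry f) (t, y)) :
    deriv (f · y) t = fderiv ℝ (uncurry f) (t, y) (1, 0) := by
  simp [fderiv_uncurry_eq_coprod hf]

theorem hasDerivAt_uncurry_along_curve {f : ℝ → Y → G} {γ : ℝ → Y} {γ' : Y} {t : ℝ}
    (hf : DifferentiableAt ℝ (uncurry f) (t, γ t)) (hγ : HasDerivAt γ γ' t) :
    HasDerivAt (fun s => f s (γ s)) (deriv (f · (γ t)) t + fderiv ℝ (f t) (γ t) γ') t := by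
  have hcurve : HasDerivAt (fun s => (s, γ s)) (1, γ') t := (hasDerivAt_id t).prodMk hγ
  have hcomp : HasDerivAt (fun s => f s (γ s)) (fderiv ℝ (uncurry f) (t, γ t) (1, γ')) t :=
    HasFDerivAt.comp_hasDerivAt (l := uncurry f) t hf.hasFDerivAt hcurve
  simpa [fderiv_uncurry_eq_coprod hf] using hcomp

theorem deriv_fderiv_comm {f : ℝ → Y → G} (hf : ContDiff ℝ 2 (uncurry f)) (t : ℝ) (y v : Y) :
    deriv (fun s => fderiv ℝ (f s) y v) t = fderiv ℝ (fun η => deriv (f · η) t) y v := by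
  have hdiff : Differentiable ℝ (uncurry f) := hf.differentiable two_ne_zero
  have hdiff₂ : Differentiable ℝ (fderiv ℝ (uncurry f)) :=
    (hf.fderiv_right (m := 1) one_add_one_eq_two.le).differentiable one_ne_zero
  have hsecond (c : ℝ × Y) : HasFDerivAt (uncurry fun s η => fderiv ℝ (uncurry f) (s, η) c)
      ((fderiv ℝ (fderiv ℝ (uncurry f)) (t, y)).flip c) (t, y) := by
    refine ((hdiff₂ (t, y)).hasFDerivAt.clm_apply (hasFDerivAt_const c (t, y))).congr_fderiv ?_
    simp
  calc deriv (fun s => fderiv ℝ (f s) y v) t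
      = deriv (fun s => fderiv ℝ (uncurry f) (s, y) (0, v)) t := by
        simp [fderiv_uncurry_eq_coprod (hdiff _)]
    _ = fderiv ℝ (fderiv ℝ (uncurry f)) (t, y) (1, 0) (0, v) := by
        rw [deriv_eq_fderiv_uncurry_apply (hsecond (0, v)).differentiableAt,
          (hsecond (0, v)).fderiv, ContinuousLinearMap.flip_apply]
    _ = fderiv ℝ (fderiv ℝ (uncurry f)) (t, y) (0, v) (1, 0) :=
        hf.contDiffAt.isSymmSndFDerivAt (by simp) _ _
    _ = fderiv ℝ (fun η => fderiv ℝ (uncurry f) (t, η) (1, 0)) y v := by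
        rw [(hasFDerivAt_uncurry_right (hsecond (1, 0)).differentiableAt).fderiv,
          (hsecond (1, 0)).fderiv]
        simp
    _ = fderiv ℝ (fun η => deriv (f · η) t) y v := by
        simp_rw [deriv_eq_fderiv_uncurry_apply (hdiff _)]

end PartialDerivatives

section ParametricIntegrals

theorem exists_eventually_forall_norm_le {X Y G : Type*} [TopologicalSpace X] [TopologicalSpace Y]
    [SeminormedAddCommGroup G] {f : X → Y → G} (hf : Continuous (uncurry f)) {K : Set Y}
    (hK : IsCompact K) (x : X) : ∃ C : ℝ, ∀ᶠ x' in 𝓝 x, ∀ y ∈ K, ‖f x' y‖ ≤ C := by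
  obtain ⟨C, hC⟩ := hK.exists_bound_of_continuousOn
    (hf.comp (Continuous.prodMk_right x)).continuousOn
  refine ⟨C + 1, hK.eventually_forall_of_forall_eventually fun y hy => ?_⟩
  have hlt : ‖f x y‖ < C + 1 := (hC y hy).trans_lt (lt_add_one C)
  exact (hf.norm.continuousAt.eventually_lt continuousAt_const hlt).mono fun _ h => h.le

-- `W` and `G` share a universe because the induction on smoothness replaces `G` by `W →L[ℝ] G`.
variable {W G : Type u} [NormedAddCommGroup W] [NormedSpace ℝ W] [NormedAddCommGroup G]
  [NormedSpace ℝ G]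

theorem hasFDerivAt_intervalIntegral_of_contDiff {f : W → ℝ → G} (hf : ContDiff ℝ 1 (uncurry f))
    (a b : ℝ) (w : W) :
    HasFDerivAt (fun x => ∫ s in a..b, f x s) (∫ s in a..b, fderiv ℝ (f · s) w) w := by
  have hdiff : Differentiable ℝ (uncurry f) := hf.differentiable one_ne_zero
  have hcont : Continuous (uncurry fun x s => fderiv ℝ (f · s) x) :=
    (contDiff_uncurry_fderiv_left hf (m := 0) (by simp)).continuous
  obtain ⟨C, hC⟩ := exists_eventually_forall_norm_le hcont isCompact_uIcc w
  have hf_slice (x : W) : Continuous (f x) := hf.continuous.comp (Continuous.prodMk_right x)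
  exact intervalIntegral.hasFDerivAt_integral_of_dominated_of_fderiv_le
    (F' := fun x s => fderiv ℝ (f · s) x) (bound := fun _ => C) hC
    (.of_forall fun x => (hf_slice x).aestronglyMeasurable)
    ((hf_slice w).intervalIntegrable a b)
    (hcont.comp (Continuous.prodMk_right w)).aestronglyMeasurable
    (.of_forall fun s hs x hx => hx s (Set.uIoc_subset_uIcc hs)) intervalIntegrable_const
    (.of_forall fun s _ x _ =>
      (hasFDerivAt_uncurry_left (hdiff (x, s))).differentiableAt.hasFDerivAt)

theorem contDiff_intervalIntegral {n : ℕ∞} {f : W → ℝ → G} (hf : ContDiff ℝ n (uncurry f))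
    (a b : ℝ) : ContDiff ℝ n (fun x => ∫ s in a..b, f x s) := by
  rw [contDiff_iff_forall_nat_le]
  intro m hm
  replace hf : ContDiff ℝ m (uncurry f) := hf.of_le (mod_cast hm)
  clear hm
  induction m generalizing G with
  | zero =>
    exact contDiff_zero.2
      (intervalIntegral.continuous_parametric_intervalIntegral_of_continuous' hf.continuous a b)
  | succ m ih =>
    have hpartial : ContDiff ℝ m (uncurry fun x s => fderiv ℝ (f · s) x) :=
      contDiff_uncurry_fderiv_left hf le_rfl
    have hf1 : ContDiff ℝ 1 (uncurry f) := hf.of_le (by simp)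
    push_cast
    exact contDiff_succ_iff_hasFDerivAt.2
      ⟨_, ih hpartial, hasFDerivAt_intervalIntegral_of_contDiff hf1 a b⟩

theorem contDiff_primitive {n : ℕ∞} {q : ℝ → W → G} (hq : ContDiff ℝ n (uncurry q)) (a : ℝ) :
    ContDiff ℝ n (uncurry fun t w => ∫ s in a..t, q s w) := by
  -- Rescaling to a fixed interval moves the endpoint `t` into the integrand.
  have hrescale : (uncurry fun t w => ∫ s in a..t, q s w) = fun v : ℝ × W =>
      (v.1 - a) • ∫ σ in (0 : ℝ)..1, q (a + (v.1 - a) * σ) v.2 := by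
    ext ⟨t, w⟩
    simp [intervalIntegral.smul_integral_comp_add_mul (f := (q · w))]
  rw [hrescale]
  have hinner : ContDiff ℝ n (uncurry fun (v : ℝ × W) σ => q (a + (v.1 - a) * σ) v.2) :=
    hq.comp (f := fun u : (ℝ × W) × ℝ => (a + (u.1.1 - a) * u.2, u.1.2)) (by fun_prop)
  exact (contDiff_fst.sub contDiff_const).smul (contDiff_intervalIntegral hinner 0 1)

end ParametricIntegrals

section Gradients

variable {F : Type*} [NormedAddCommGroup F] [InnerProductSpace ℝ F] [CompleteSpace F]

theorem hasGradientAt_sub {f g : F → ℝ} {f' g' ξ : F} (hf : HasGradientAt f f' ξ)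
    (hg : HasGradientAt g g' ξ) : HasGradientAt (fun η => f η - g η) (f' - g') ξ := by
  rw [hasGradientAt_iff_hasFDerivAt, map_sub]
  exact hf.hasFDerivAt.sub hg.hasFDerivAt

theorem inner_fderiv_gradient {φ : F → ℝ} {ξ : F} (hφ : DifferentiableAt ℝ (fderiv ℝ φ) ξ)
    (u v : F) : ⟪fderiv ℝ (∇ φ) ξ u, v⟫_ℝ = fderiv ℝ (fderiv ℝ φ) ξ u v := by
  have hgrad : DifferentiableAt ℝ (∇ φ) ξ :=
    (InnerProductSpace.toDual ℝ F).symm.toContinuousLinearEquiv.differentiableAt.comp ξ hφ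
  calc ⟪fderiv ℝ (∇ φ) ξ u, v⟫_ℝ
      = fderiv ℝ (fun η => ⟪∇ φ η, v⟫_ℝ) ξ u := by
        rw [fderiv_inner_apply ℝ hgrad (differentiableAt_const v)]
        simp
    _ = fderiv ℝ (fun η => fderiv ℝ φ η v) ξ u := by simp_rw [inner_gradient_left]
    _ = fderiv ℝ (fderiv ℝ φ) ξ u v := by simp [fderiv_clm_apply hφ (differentiableAt_const v)]

theorem isSelfAdjoint_fderiv_gradient {φ : F → ℝ} {ξ : F} (hφ : ContDiffAt ℝ 2 φ ξ) :
    IsSelfAdjoint (fderiv ℝ (∇ φ) ξ) := by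
  have hdiff : DifferentiableAt ℝ (fderiv ℝ φ) ξ :=
    (hφ.fderiv_right (m := 1) one_add_one_eq_two.le).differentiableAt one_ne_zero
  refine ContinuousLinearMap.isSelfAdjoint_iff_isSymmetric.2 fun u v => ?_
  calc ⟪fderiv ℝ (∇ φ) ξ u, v⟫_ℝ
      = fderiv ℝ (fderiv ℝ φ) ξ u v := inner_fderiv_gradient hdiff u v
    _ = fderiv ℝ (fderiv ℝ φ) ξ v u := hφ.isSymmSndFDerivAt (by simp) u v
    _ = ⟪u, fderiv ℝ (∇ φ) ξ v⟫_ℝ := by rw [real_inner_comm, inner_fderiv_gradient hdiff]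

theorem contDiff_uncurry_gradient {X : Type*} [NormedAddCommGroup X] [NormedSpace ℝ X]
    {m n : WithTop ℕ∞} {Φ : X → F → ℝ} (hΦ : ContDiff ℝ n (uncurry Φ)) (hmn : m + 1 ≤ n) :
    ContDiff ℝ m (uncurry fun x => ∇ (Φ x)) :=
  (InnerProductSpace.toDual ℝ F).symm.toContinuousLinearEquiv.contDiff.comp
    (contDiff_uncurry_fderiv_right hΦ hmn)

theorem differentiable_uncurry_gradient {X : Type*} [NormedAddCommGroup X] [NormedSpace ℝ X]
    {Φ : X → F → ℝ} (hΦ : ContDiff ℝ 2 (uncurry Φ)) :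
    Differentiable ℝ (uncurry fun x => ∇ (Φ x)) :=
  (contDiff_uncurry_gradient hΦ (m := 1) one_add_one_eq_two.le).differentiable one_ne_zero

theorem hasGradientAt_deriv {Φ : ℝ → F → ℝ} (hΦ : ContDiff ℝ 2 (uncurry Φ)) (t : ℝ) (ξ : F) :
    HasGradientAt (fun η => deriv (Φ · η) t) (deriv (fun s => ∇ (Φ s) ξ) t) ξ := by
  have hgrad : DifferentiableAt ℝ (fun s => ∇ (Φ s) ξ) t :=
    (hasFDerivAt_uncurry_left (differentiable_uncurry_gradient hΦ (t, ξ))).differentiableAt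
  have hderiv : DifferentiableAt ℝ (fun η => deriv (Φ · η) t) ξ := by
    simp_rw [← fderiv_apply_one_eq_deriv]
    exact (((contDiff_uncurry_fderiv_left hΦ (m := 1) one_add_one_eq_two.le).comp
      (contDiff_prodMk_right t)).clm_apply contDiff_const).differentiable one_ne_zero ξ
  convert hderiv.hasGradientAt using 1
  refine ext_inner_right ℝ fun v => ?_
  calc ⟪deriv (fun s => ∇ (Φ s) ξ) t, v⟫_ℝ
      = deriv (fun s => ⟪∇ (Φ s) ξ, v⟫_ℝ) t := by
        rw [deriv_inner_apply ℝ hgrad (differentiableAt_const v)]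
        simp
    _ = deriv (fun s => fderiv ℝ (Φ s) ξ v) t := by simp_rw [inner_gradient_left]
    _ = fderiv ℝ (fun η => deriv (Φ · η) t) ξ v := deriv_fderiv_comm hΦ t ξ v
    _ = ⟪∇ (fun η => deriv (Φ · η) t) ξ, v⟫_ℝ := inner_gradient_left.symm

theorem hasGradientAt_uncurry_comp {K : Type*} [NormedAddCommGroup K] [InnerProductSpace ℝ K]
    [CompleteSpace K] {P : K → F → ℝ} {g : F → K} {g' : F →L[ℝ] K} {ξ : F}
    (hP : DifferentiableAt ℝ (uncurry P) (g ξ, ξ)) (hg : HasFDerivAt g g' ξ) :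
    HasGradientAt (fun η => P (g η) η) (g'.adjoint (∇ (P · ξ) (g ξ)) + ∇ (P (g ξ)) ξ) ξ := by
  have hchain := HasFDerivAt.comp (g := uncurry P) (f := fun η => (g η, id η)) ξ hP.hasFDerivAt
    (hg.prodMk (hasFDerivAt_id ξ))
  refine hasGradientAt_iff_hasFDerivAt.2 (hchain.congr_fderiv ?_)
  ext v
  simp [fderiv_uncurry_eq_coprod hP, ContinuousLinearMap.adjoint_inner_left]

end Gradients

section EffectiveHamiltonian

variable {F : Type*} [NormedAddCommGroup F] [InnerProductSpace ℝ F] [CompleteSpace F]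

/-- The Hamiltonian `P(z + ∇_ξΦ(t,ξ), ξ) − ∂_tΦ(t,ξ)` governing the shifted position
`z = x − ∇_ξΦ(t,ξ)` along the flow of `P`, for an arbitrary phase `Φ`. -/
def effectiveHamiltonian (P : F → F → ℝ) (Φ : ℝ → F → ℝ) (t : ℝ) (z ξ : F) : ℝ :=
  P (z + ∇ (Φ t) ξ) ξ - deriv (Φ · ξ) t

theorem gradient_effectiveHamiltonian_position (P : F → F → ℝ) (Φ : ℝ → F → ℝ) (t : ℝ) (z ξ : F) :
    ∇ (fun z' => effectiveHamiltonian P Φ t z' ξ) z = ∇ (P · ξ) (z + ∇ (Φ t) ξ) := by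
  simp only [effectiveHamiltonian, gradient, fderiv_sub_const]
  rw [fderiv_comp_add_right (f := (P · ξ))]

theorem gradient_effectiveHamiltonian_momentum {P : F → F → ℝ} {Φ : ℝ → F → ℝ}
    (hP : Differentiable ℝ (uncurry P)) (hΦ : ContDiff ℝ 2 (uncurry Φ)) (t : ℝ) (z ξ : F) :
    ∇ (effectiveHamiltonian P Φ t z) ξ =
      fderiv ℝ (∇ (Φ t)) ξ (∇ (P · ξ) (z + ∇ (Φ t) ξ)) + ∇ (P (z + ∇ (Φ t) ξ)) ξ
        - deriv (fun s => ∇ (Φ s) ξ) t := by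
  have hφ : ContDiff ℝ 2 (Φ t) := hΦ.comp (contDiff_prodMk_right t)
  have hgrad : HasFDerivAt (fun η => z + ∇ (Φ t) η) (fderiv ℝ (∇ (Φ t)) ξ) ξ :=
    (hasFDerivAt_uncurry_right
      (differentiable_uncurry_gradient hΦ (t, ξ))).differentiableAt.hasFDerivAt.const_add z
  have hP' := hasGradientAt_uncurry_comp (hP _) hgrad
  rw [(isSelfAdjoint_fderiv_gradient hφ.contDiffAt).adjoint_eq] at hP'
  exact (hasGradientAt_sub hP' (hasGradientAt_deriv hΦ t ξ)).gradient

theorem hasDerivAt_sub_gradient_of_hamilton {P : F → F → ℝ} {Φ : ℝ → F → ℝ}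
    (hP : Differentiable ℝ (uncurry P)) (hΦ : ContDiff ℝ 2 (uncurry Φ)) {x ξ : ℝ → F} {t : ℝ}
    (hx : HasDerivAt x (∇ (P (x t)) (ξ t)) t) (hξ : HasDerivAt ξ (-∇ (P · (ξ t)) (x t)) t) :
    HasDerivAt (fun s => x s - ∇ (Φ s) (ξ s))
      (∇ (effectiveHamiltonian P Φ t (x t - ∇ (Φ t) (ξ t))) (ξ t)) t := by
  refine (hx.sub (hasDerivAt_uncurry_along_curve (f := fun s => ∇ (Φ s))
    (differentiable_uncurry_gradient hΦ _) hξ)).congr_deriv ?_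
  rw [gradient_effectiveHamiltonian_momentum hP hΦ, sub_add_cancel, map_neg]
  abel

end EffectiveHamiltonian

section DollardPhase

variable {d : ℕ} {a : Fin d → Fin d → E d → ℝ} {VL VS : E d → ℝ}

theorem contDiff_kk {n : WithTop ℕ∞} (ha : ∀ i j, ContDiff ℝ n (a i j)) :
    ContDiff ℝ n (uncurry (kk a)) := by
  have hcoord (i : Fin d) : ContDiff ℝ n (fun w : E d × E d => w.2 i) := by fun_prop
  refine contDiff_const.mul (ContDiff.sum fun i _ => ContDiff.sum fun j _ => ?_)
  exact (((ha i j).comp contDiff_fst).mul (hcoord i)).mul (hcoord j)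

theorem contDiff_pLr_ray {n : WithTop ℕ∞} (ha : ∀ i j, ContDiff ℝ n (a i j))
    (hVL : ContDiff ℝ n VL) : ContDiff ℝ n (uncurry fun (t : ℝ) ξ => pLr a VL (t • ξ) ξ) :=
  ((contDiff_kk ha).comp (f := fun w : ℝ × E d => (w.1 • w.2, w.2)) (by fun_prop)).add
    (hVL.comp (f := fun w : ℝ × E d => w.1 • w.2) (by fun_prop))

theorem differentiable_pp (ha : ∀ i j, ContDiff ℝ 1 (a i j)) (hVL : Differentiable ℝ VL)
    (hVS : Differentiable ℝ VS) : Differentiable ℝ (uncurry (pp a VL VS)) :=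
  ((contDiff_kk ha).differentiable one_ne_zero).add
    ((hVL.comp differentiable_fst).add (hVS.comp differentiable_fst))

theorem contDiff_Phi {n : ℕ∞} (ha : ∀ i j, ContDiff ℝ n (a i j)) (hVL : ContDiff ℝ n VL) :
    ContDiff ℝ n (uncurry (Phi a VL)) :=
  contDiff_primitive (contDiff_pLr_ray ha hVL) 0

theorem deriv_Phi (ha : ∀ i j, Continuous (a i j)) (hVL : Continuous VL) (t : ℝ) (ξ : E d) :
    deriv (Phi a VL · ξ) t = pLr a VL (t • ξ) ξ := by
  have hray : Continuous (uncurry fun (t : ℝ) ξ => pLr a VL (t • ξ) ξ) :=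
    (contDiff_pLr_ray (fun i j => contDiff_zero.2 (ha i j)) (contDiff_zero.2 hVL)).continuous
  exact (hray.comp (Continuous.prodMk_left ξ)).deriv_integral _ 0 t

theorem ell_eq_effectiveHamiltonian (ha : ∀ i j, Continuous (a i j)) (hVL : Continuous VL)
    (t : ℝ) : ell a VL VS t = effectiveHamiltonian (pp a VL VS) (Phi a VL) t := by
  ext z ξ
  rw [ell, effectiveHamiltonian, deriv_Phi ha hVL]

theorem gradient_Phi_zero (ξ : E d) : ∇ (Phi a VL 0) ξ = 0 := by
  have hzero : Phi a VL 0 = fun _ => 0 := funext fun _ => intervalIntegral.integral_same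
  rw [hzero, gradient_fun_const]

end DollardPhase

theorem stmt15_general {d : ℕ} {a : Fin d → Fin d → E d → ℝ} {VL VS : E d → ℝ}
    (ha : ∀ m n, ContDiff ℝ 2 (a m n)) (hVL : ContDiff ℝ 2 VL) (hVS : Differentiable ℝ VS)
    {x ξ z : ℝ → E d} (hHam : IsHamiltonSol (pp a VL VS) x ξ)
    (hz : ∀ t, z t = x t - gradient (Phi a VL t) (ξ t)) :
    (∀ t, HasDerivAt z (gradient (ell a VL VS t (z t)) (ξ t)) t ∧
      HasDerivAt ξ (-gradient (fun z' => ell a VL VS t z' (ξ t)) (z t)) t) ∧ z 0 = x 0 := by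
  have hP : Differentiable ℝ (uncurry (pp a VL VS)) :=
    differentiable_pp (fun m n => (ha m n).of_le one_le_two) (hVL.differentiable two_ne_zero) hVS
  have hΦ : ContDiff ℝ 2 (uncurry (Phi a VL)) := contDiff_Phi (n := 2) ha hVL
  refine ⟨fun t => ?_, by rw [hz, gradient_Phi_zero, sub_zero]⟩
  obtain ⟨hx, hξ⟩ := hHam t
  rw [ell_eq_effectiveHamiltonian (fun m n => (ha m n).continuous) hVL.continuous]
  constructor
  · rw [funext hz]
    exact hasDerivAt_sub_gradient_of_hamilton hP hΦ hx hξ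
  · rwa [gradient_effectiveHamiltonian_position, hz, sub_add_cancel]

/-- Lemma 8: the modified trajectory solves the Hamilton equations for `ℓ`. -/
theorem stmt15 (d : ℕ) (hd : 1 ≤ d) (μ ν : ℝ) (hμ : 1 / 2 < μ) (hμ1 : μ ≤ 1) (hν : 1 < ν)
    (a : Fin d → Fin d → E d → ℝ) (VL VS : E d → ℝ) (hAC : AssumptionC μ ν a VL VS)
    (x ξ : ℝ → E d) (x0 ξ0 : E d) (hx0 : x 0 = x0) (hξ0 : ξ 0 = ξ0)
    (hHam : IsHamiltonSol (pp a VL VS) x ξ)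
    (z : ℝ → E d) (hz : ∀ t : ℝ, z t = x t - gradient (Phi a VL t) (ξ t)) :
    (∀ t : ℝ,
      HasDerivAt z (gradient (fun ξ' => ell a VL VS t (z t) ξ') (ξ t)) t ∧
      HasDerivAt ξ (-gradient (fun z' => ell a VL VS t z' (ξ t)) (z t)) t) ∧
    z 0 = x0 ∧ ξ 0 = ξ0 := by
  obtain ⟨ha, -, -, -, hVL, hVS, -, -⟩ := hAC
  obtain ⟨hflow, hz0⟩ := stmt15_general (fun m n => (ha m n).of_le (by norm_cast))
    (hVL.of_le (by norm_cast)) (hVS.differentiable (by simp)) hHam hz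
  exact ⟨hflow, hz0.trans hx0, hξ0⟩
end
end
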